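/- arXiv:2412.03559 — 3 statements merged into one kernel-verified Lean document; each statement's English description precedes it below -/
import Mathlib

section
/- Let 0<q<1 be real, let g be a nonzero purely imaginary complex number, let b be a nonzero complex number and c = conj(b), and assume the parameters are such that no factor appearing in a denominator of F_{n,k}(g,b,c|q) or of h_n(g,b,c|q) vanishes. Then the functions F_n(z) = F_n(z;g,b,c|q), n ∈ ℤ, form a family of orthogonal functions on the unit circle with weight function w(z)=1: for all n,m ∈ ℤ, (1/2π)∫_0^{2π} F_n(e^{iθ}) · conj(F_m(e^{iθ})) dθ = h_n(g,b,c|q) δ_{n,m}. -/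
open Complex

/-- The infinite `q`-shifted factorial `(a;q)_∞`. -/
noncomputable def qPochInf (a q : ℂ) : ℂ := ∏' j : ℕ, (1 - a * q ^ j)

/-- The `q`-shifted factorial `(a;q)_k` for integer `k`, given by the
(generically equal) product formulas. -/
noncomputable def qPoch (a q : ℂ) (k : ℤ) : ℂ :=
  if 0 ≤ k then ∏ j ∈ Finset.range k.toNat, (1 - a * q ^ j)
  else (∏ j ∈ Finset.range (-k).toNat, (1 - a * q ^ (-(j : ℤ) - 1)))⁻¹

/-- The coefficients `F_{n,k}(g,b,c|q)`. -/
noncomputable def Fnk (q : ℝ) (g b c : ℂ) (n k : ℤ) : ℂ :=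
  (1 - g * (q : ℂ) ^ k) / (1 - g) *
    (qPoch b (q : ℂ) (n + k) * qPoch (g ^ 2 / c) (q : ℂ) (k - n) /
      (qPoch (c * (q : ℂ)) (q : ℂ) (n + k) * qPoch (g ^ 2 * (q : ℂ) / b) (q : ℂ) (k - n))) *
    ((Real.sqrt q : ℂ)) ^ k

/-- The function `F_n(z; g,b,c|q) = Σ_{k∈ℤ} F_{n,k}(g,b,c|q) z^k`. -/
noncomputable def Fq (q : ℝ) (g b c : ℂ) (n : ℤ) (z : ℂ) : ℂ :=
  ∑' k : ℤ, Fnk q g b c n k * z ^ k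

/-- The squared norms `h_n(g,b,c|q)`. -/
noncomputable def hnorm (q : ℝ) (g b c : ℂ) (n : ℤ) : ℂ :=
  qPochInf (q : ℂ) (q : ℂ) * qPochInf (q : ℂ) (q : ℂ) * qPochInf (g ^ 2 * (q : ℂ)) (q : ℂ) *
      qPochInf ((q : ℂ) / g ^ 2) (q : ℂ) * qPochInf (g ^ 2 * (q : ℂ) / (b * c)) (q : ℂ) *
      qPochInf (b * c * (q : ℂ) / g ^ 2) (q : ℂ) * qPochInf (c * (q : ℂ) / b) (q : ℂ) *
      qPochInf (b * (q : ℂ) / c) (q : ℂ) /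
    (qPochInf (g ^ 2 * (q : ℂ) / b) (q : ℂ) * qPochInf (b * (q : ℂ) / g ^ 2) (q : ℂ) *
      qPochInf (g ^ 2 * (q : ℂ) / c) (q : ℂ) * qPochInf (c * (q : ℂ) / g ^ 2) (q : ℂ) *
      qPochInf (b * (q : ℂ)) (q : ℂ) * qPochInf ((q : ℂ) / b) (q : ℂ) *
      qPochInf (c * (q : ℂ)) (q : ℂ) * qPochInf ((q : ℂ) / c) (q : ℂ)) *
  ((1 - b * c / g ^ 2) / (1 - b * c * (q : ℂ) ^ (2 * n) / g ^ 2)) * (q : ℂ) ^ n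

open Filter Topology

/-- Finite q-product. -/
noncomputable def Pn (q z : ℂ) (n : ℕ) : ℂ := ∏ j ∈ Finset.range n, (1 - z * q ^ j)

lemma summ_zq {q : ℂ} (hq : ‖q‖ < 1) (z : ℂ) : Summable (fun j : ℕ => ‖-(z * q ^ j)‖) := by
  simp only [norm_neg, norm_mul, norm_pow]
  exact (summable_geometric_of_lt_one (norm_nonneg _) hq).mul_left _

lemma mult_zq {q : ℂ} (hq : ‖q‖ < 1) (z : ℂ) : Multipliable (fun j : ℕ => 1 - z * q ^ j) := by
  have := multipliable_one_add_of_summable (summ_zq hq z)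
  simpa [sub_eq_add_neg] using this

lemma Pn_tendsto {q : ℂ} (hq : ‖q‖ < 1) (z : ℂ) :
    Tendsto (Pn q z) atTop (𝓝 (qPochInf z q)) :=
  (mult_zq hq z).tendsto_prod_tprod_nat

lemma qPochInf_ne_zero {q : ℂ} (hq : ‖q‖ < 1) {z : ℂ} (hz : ∀ j : ℕ, z * q ^ j ≠ 1) :
    qPochInf z q ≠ 0 := by
  have := tprod_one_add_ne_zero_of_summable (f := fun j : ℕ => -(z * q ^ j)) (by
    intro i h
    apply hz i
    linear_combination -h) (summ_zq hq z)
  simpa [qPochInf, sub_eq_add_neg] using this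

lemma Pn_ne_zero {q z : ℂ} (hz : ∀ j : ℕ, z * q ^ j ≠ 1) (n : ℕ) : Pn q z n ≠ 0 := by
  rw [Pn, Finset.prod_ne_zero_iff]
  intro j _ h
  exact hz j (by linear_combination -h)

lemma qPochInf_succ {q : ℂ} (hq : ‖q‖ < 1) (z : ℂ) :
    qPochInf z q = (1 - z) * qPochInf (z * q) q := by
  have h1 := (Pn_tendsto hq z).comp (tendsto_add_atTop_nat 1)
  have h2 := (Pn_tendsto hq (z * q)).const_mul (1 - z)
  refine tendsto_nhds_unique h1 (h2.congr fun n => ?_)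
  simp only [Pn, Function.comp, Finset.prod_range_succ']
  rw [mul_comm]
  congr 1
  · exact Finset.prod_congr rfl fun j _ => by ring
  · simp

lemma Pn_bdd {q : ℂ} (hq : ‖q‖ < 1) (z : ℂ) : ∃ M : ℝ, 0 ≤ M ∧ ∀ n, ‖Pn q z n‖ ≤ M := by
  obtain ⟨M, hM⟩ := (Metric.isBounded_range_of_tendsto _ (Pn_tendsto hq z)).exists_norm_le
  exact ⟨M, (norm_nonneg _).trans (hM _ ⟨0, rfl⟩), fun n => hM _ ⟨n, rfl⟩⟩

lemma Pn_inv_bdd {q : ℂ} (hq : ‖q‖ < 1) {z : ℂ} (hz : ∀ j : ℕ, z * q ^ j ≠ 1) :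
    ∃ M : ℝ, 0 ≤ M ∧ ∀ n, ‖(Pn q z n)⁻¹‖ ≤ M := by
  obtain ⟨M, hM⟩ := (Metric.isBounded_range_of_tendsto _
    ((Pn_tendsto hq z).inv₀ (qPochInf_ne_zero hq hz))).exists_norm_le
  exact ⟨M, (norm_nonneg _).trans (hM _ ⟨0, rfl⟩), fun n => hM _ ⟨n, rfl⟩⟩

/-- theta function -/
noncomputable def th (q z : ℂ) : ℂ := qPochInf z q * qPochInf (q / z) q

/-- reduced theta function -/
noncomputable def th' (q z : ℂ) : ℂ := qPochInf (z * q) q * qPochInf (q / z) q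

lemma th_eq {q : ℂ} (hq : ‖q‖ < 1) (z : ℂ) : th q z = (1 - z) * th' q z := by
  rw [th, th', qPochInf_succ hq z]; ring

lemma th_mul_q {q : ℂ} (hq : ‖q‖ < 1) (hq0 : q ≠ 0) {z : ℂ} (hz : z ≠ 0) :
    th q (z * q) = -z⁻¹ * th q z := by
  rw [th, th, qPochInf_succ hq z]
  have : q / (z * q) = z⁻¹ := by field_simp
  rw [this, qPochInf_succ hq z⁻¹]
  have : z⁻¹ * q = q / z := by field_simp
  rw [this]
  field_simp
  ring

/-- the pair quasi-periodicity -/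
lemma th_pair {q : ℂ} (hq : ‖q‖ < 1) (hq0 : q ≠ 0) {a y : ℂ} (ha : a ≠ 0) (hy : y ≠ 0) :
    th q (y * q) * th q (a / (y * q)) = a / (y ^ 2 * q) * (th q y * th q (a / y)) := by
  have h1 := th_mul_q hq hq0 hy
  have h2 := th_mul_q hq hq0 (z := a / (y * q)) (by positivity)
  have : a / (y * q) * q = a / y := by field_simp
  rw [this] at h2
  rw [h1, h2]
  field_simp

lemma th_pair_zpow {q : ℂ} (hq : ‖q‖ < 1) (hq0 : q ≠ 0) {a y : ℂ} (ha : a ≠ 0) (hy : y ≠ 0)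
    (n : ℤ) :
    th q (y * q ^ n) * th q (a / (y * q ^ n)) =
      (a / y ^ 2) ^ n * q ^ (-(n * n)) * (th q y * th q (a / y)) := by
  have hd : a / y ^ 2 ≠ 0 := by positivity
  have key : ∀ m : ℤ, th q (y * q ^ (m + 1)) * th q (a / (y * q ^ (m + 1))) =
      a / y ^ 2 * q ^ (-(2 * m + 1)) * (th q (y * q ^ m) * th q (a / (y * q ^ m))) := by
    intro m
    have h := th_pair hq hq0 ha (y := y * q ^ m) (by positivity)
    rw [zpow_add_one₀ hq0, ← mul_assoc, h]
    congr 1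
    rw [zpow_neg, zpow_add_one₀ hq0, mul_comm 2 m, zpow_mul, zpow_ofNat]
    field_simp
  induction n using Int.induction_on with
  | zero => simp
  | succ n ih =>
    rw [key, ih, zpow_add_one₀ hd]
    have : q ^ (-(((n : ℤ) + 1) * (n + 1))) = q ^ (-(2 * (n : ℤ) + 1)) * q ^ (-((n : ℤ) * n)) := by
      rw [← zpow_add₀ hq0]; congr 1; ring
    rw [this]; ring
  | pred n ih =>
    have h := key (-(n : ℤ) - 1)
    rw [sub_add_cancel, ih] at h
    have e1 : (a / y ^ 2) ^ (-(n : ℤ)) = (a / y ^ 2) ^ (-(n : ℤ) - 1) * (a / y ^ 2) := by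
      rw [← zpow_add_one₀ hd]; congr 1; ring
    have : q ^ (-(-(n : ℤ) * -n)) =
        q ^ (-(2 * (-(n : ℤ) - 1) + 1)) * q ^ (-((-(n : ℤ) - 1) * (-n - 1))) := by
      rw [← zpow_add₀ hq0]; congr 1; ring
    rw [e1, this] at h
    have h0 : a / y ^ 2 * q ^ (-(2 * (-(n : ℤ) - 1) + 1)) ≠ 0 := by positivity
    apply mul_left_cancel₀ h0
    rw [← h]; ring

lemma th_even {q : ℂ} (hq : ‖q‖ < 1) (hq0 : q ≠ 0) {z : ℂ} (hz : z ≠ 0) (n : ℤ) :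
    th q (z / q ^ (2 * n)) = z ^ (2 * n) * q ^ (-(2 * n * n) - n) * th q z := by
  have key : ∀ m : ℤ, th q (z / q ^ (2 * m)) =
      z⁻¹ ^ 2 * q ^ (4 * m + 3) * th q (z / q ^ (2 * (m + 1))) := by
    intro m
    have h1 := th_mul_q hq hq0 (z := z / q ^ (2 * (m + 1))) (by positivity)
    have h2 := th_mul_q hq hq0 (z := z / q ^ (2 * (m + 1)) * q) (by positivity)
    have e : q ^ (2 * (m + 1)) = q ^ (2 * m) * q * q := by
      rw [← zpow_add_one₀ hq0, ← zpow_add_one₀ hq0]; congr 1; ring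
    have e2 : z / q ^ (2 * (m + 1)) * q * q = z / q ^ (2 * m) := by
      rw [e]; field_simp
    have e3 : q ^ (4 * m + 3) = q ^ (2 * m) * q ^ (2 * m) * q ^ 3 := by
      rw [← zpow_natCast, ← zpow_add₀ hq0, ← zpow_add₀ hq0]; congr 1; push_cast; ring
    rw [e2, h1] at h2
    rw [h2, e3]
    rw [e]
    field_simp
  have hz2 : z⁻¹ ^ 2 ≠ 0 := by positivity
  have hzz : ∀ m : ℤ, z ^ (2 * (m + 1)) = z ^ (2 * m) * z ^ 2 := by
    intro m
    rw [← zpow_natCast, ← zpow_add₀ hz]; congr 1; push_cast; ring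
  have hqq : ∀ m : ℤ, q ^ (-(2 * m * m) - m) =
      q ^ (4 * m + 3) * q ^ (-(2 * (m + 1) * (m + 1)) - (m + 1)) := by
    intro m
    rw [← zpow_add₀ hq0]; congr 1; ring
  induction n using Int.induction_on with
  | zero => simp
  | succ n ih =>
    have h := key n
    rw [ih] at h
    have h0 : z⁻¹ ^ 2 * q ^ (4 * (n : ℤ) + 3) ≠ 0 := by positivity
    apply mul_left_cancel₀ h0
    rw [← h, hzz, hqq n]
    field_simp
  | pred n ih =>
    have h := key (-(n : ℤ) - 1)
    have e := hqq (-(n : ℤ) - 1)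
    have e' := hzz (-(n : ℤ) - 1)
    rw [sub_add_cancel] at h e e'
    rw [h, ih, e, e']
    field_simp

lemma qPoch_succ {q z : ℂ} (hz : ∀ j : ℤ, z * q ^ j ≠ 1) (k : ℤ) :
    qPoch z q (k + 1) = qPoch z q k * (1 - z * q ^ k) := by
  obtain ⟨n, rfl | rfl⟩ := k.eq_nat_or_neg
  · have h1 : (0 : ℤ) ≤ n + 1 := by positivity
    have h2 : (0 : ℤ) ≤ n := by positivity
    have h3 : ((n : ℤ) + 1).toNat = n + 1 := by omega
    simp [qPoch, h1, h2, h3, Finset.prod_range_succ]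
  · cases n with
    | zero => simp [qPoch]
    | succ n =>
      have hne : 1 - z * q ^ (-(n : ℤ) - 1) ≠ 0 := by
        intro h; exact hz _ (by linear_combination -h)
      have e : -((n + 1 : ℕ) : ℤ) = -(n : ℤ) - 1 := by push_cast; ring
      rw [e, sub_add_cancel]
      have h2 : ¬ (0 : ℤ) ≤ -(n : ℤ) - 1 := by omega
      have h3 : (-(-(n : ℤ) - 1)).toNat = n + 1 := by omega
      have h4 : qPoch z q (-(n : ℤ)) = (∏ j ∈ Finset.range n, (1 - z * q ^ (-(j : ℤ) - 1)))⁻¹ := by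
        cases n with
        | zero => simp [qPoch]
        | succ n =>
          have h2 : ¬ (0 : ℤ) ≤ -((n + 1 : ℕ) : ℤ) := by omega
          rw [qPoch, if_neg h2, neg_neg]; simp
      rw [h4, qPoch, if_neg h2, h3, Finset.prod_range_succ, mul_inv, mul_assoc,
        inv_mul_cancel₀ hne, mul_one]

lemma qPoch_zero (q z : ℂ) : qPoch z q 0 = 1 := by simp [qPoch]

lemma qPoch_ne_zero {q z : ℂ} (hz : ∀ j : ℤ, z * q ^ j ≠ 1) (k : ℤ) : qPoch z q k ≠ 0 := by
  have h1 : ∀ j : ℤ, 1 - z * q ^ j ≠ 0 := fun j h => hz j (by linear_combination -h)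
  induction k using Int.induction_on with
  | zero => simp [qPoch]
  | succ n ih => rw [qPoch_succ hz]; exact mul_ne_zero ih (h1 _)
  | pred n ih =>
    have := qPoch_succ hz (-(n : ℤ) - 1)
    rw [sub_add_cancel] at this
    rw [this] at ih
    exact left_ne_zero_of_mul ih

lemma qPoch_mul_q {q z : ℂ} (hq0 : q ≠ 0) (hz : ∀ j : ℤ, z * q ^ j ≠ 1) (k : ℤ) :
    (1 - z) * qPoch (z * q) q k = qPoch z q (k + 1) := by
  have hz' : ∀ j : ℤ, z * q * q ^ j ≠ 1 := fun j => by
    rw [mul_assoc, ← zpow_one_add₀ hq0]; exact hz _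
  have h1 : ∀ j : ℤ, 1 - z * q ^ j ≠ 0 := fun j h => hz j (by linear_combination -h)
  have e : ∀ k : ℤ, z * q ^ (k + 1) = z * q * q ^ k := fun k => by rw [zpow_add_one₀ hq0]; ring
  induction k using Int.induction_on with
  | zero => rw [qPoch_succ hz]; simp [qPoch_zero]
  | succ n ih =>
    rw [qPoch_succ hz, qPoch_succ hz', ← ih, e]; ring
  | pred n ih =>
    have h2 := qPoch_succ hz' (-(n : ℤ) - 1)
    have h3 := qPoch_succ hz (-(n : ℤ) - 1 + 1)
    have h4 := h1 (-(n : ℤ) - 1 + 1)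
    rw [e, sub_add_cancel] at h3
    rw [e] at h4
    rw [sub_add_cancel] at h2 ⊢
    rw [h2, h3, ← mul_assoc] at ih
    exact mul_right_cancel₀ h4 ih

lemma qPoch_add {q z : ℂ} (hz : ∀ j : ℤ, z * q ^ j ≠ 1) (k : ℤ) (r : ℕ) :
    qPoch z q (k + r) = qPoch z q k * ∏ i ∈ Finset.range r, (1 - z * q ^ (k + i)) := by
  induction r with
  | zero => simp
  | succ r ih =>
    push_cast
    rw [← add_assoc, qPoch_succ hz, ih, Finset.prod_range_succ]; ring

lemma ne_one_of_qPoch {q z : ℂ} (h : ∀ m : ℤ, qPoch z q m ≠ 0) (j : ℤ) : z * q ^ j ≠ 1 := by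
  intro hj
  obtain ⟨n, rfl | rfl⟩ := j.eq_nat_or_neg
  · have := h (n + 1)
    have h1 : (0 : ℤ) ≤ n + 1 := by positivity
    have h3 : ((n : ℤ) + 1).toNat = n + 1 := by omega
    rw [qPoch, if_pos h1, h3, Finset.prod_range_succ] at this
    apply right_ne_zero_of_mul this
    rw [zpow_natCast] at hj
    rw [hj, sub_self]
  · cases n with
    | zero =>
      have := h 1
      simp [qPoch] at this hj
      exact this (by rw [hj, sub_self])
    | succ n =>
      have := h (-(n : ℤ) - 1)
      have h2 : ¬ (0 : ℤ) ≤ -(n : ℤ) - 1 := by omega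
      have h3 : (-(-(n : ℤ) - 1)).toNat = n + 1 := by omega
      have e : -((n + 1 : ℕ) : ℤ) = -(n : ℤ) - 1 := by push_cast; ring
      rw [qPoch, if_neg h2, h3, Finset.prod_range_succ] at this
      apply right_ne_zero_of_mul (inv_eq_zero.not.1 this)
      rw [← e, hj, sub_self]

lemma conj_qPoch (q : ℝ) (z : ℂ) (k : ℤ) :
    (starRingEnd ℂ) (qPoch z q k) = qPoch ((starRingEnd ℂ) z) q k := by
  unfold qPoch
  split_ifs <;> simp [map_prod, map_inv₀, map_zpow₀]

/-- nodes -/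
noncomputable def Xn (q a : ℂ) (k : ℤ) : ℂ := q ^ (-k) + a * q ^ k

/-- zeros -/
noncomputable def Yn (q a y : ℂ) (j : ℤ) : ℂ := y * q ^ j + a / (y * q ^ j)

noncomputable def kap (q z : ℂ) (M : ℕ) : ℂ := ∏ j ∈ Finset.range M, (-z * q ^ (-(j : ℤ) - 1))

lemma kap_mul (q : ℂ) {x y z w : ℂ} (h1 : x * y = z * w) (M : ℕ) :
    kap q x M * kap q y M = kap q z M * kap q w M := by
  simp only [kap, ← Finset.prod_mul_distrib]
  refine Finset.prod_congr rfl fun j _ => ?_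
  linear_combination (q ^ (-(j : ℤ) - 1)) ^ 2 * h1

lemma kap_ne_zero {q z : ℂ} (hq0 : q ≠ 0) (hz : z ≠ 0) (M : ℕ) : kap q z M ≠ 0 := by
  rw [kap, Finset.prod_ne_zero_iff]
  intro j _
  exact mul_ne_zero (neg_ne_zero.2 hz) (zpow_ne_zero _ hq0)

lemma Eprod {q z : ℂ} (hq0 : q ≠ 0) (hz : z ≠ 0) (M P : ℕ) :
    ∏ l ∈ (Finset.Icc (-(M : ℤ)) P).erase 0, (1 - z * q ^ l) =
      kap q z M * Pn q (z * q) P * Pn q (q / z) M := by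
  induction P with
  | zero =>
    induction M with
    | zero => simp [kap, Pn]
    | succ M ih =>
      have e : (Finset.Icc (-((M + 1 : ℕ) : ℤ)) (0 : ℕ)).erase 0 =
          insert (-(M : ℤ) - 1) ((Finset.Icc (-(M : ℤ)) (0 : ℕ)).erase 0) := by
        ext l; simp; omega
      have hn : (-(M : ℤ) - 1) ∉ ((Finset.Icc (-(M : ℤ)) (0 : ℕ)).erase 0) := by
        simp
      rw [e, Finset.prod_insert hn, ih]
      simp only [kap, Pn, Finset.prod_range_succ]
      have : 1 - z * q ^ (-(M : ℤ) - 1) = (-z * q ^ (-(M : ℤ) - 1)) * (1 - q / z * q ^ M) := by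
        rw [zpow_sub₀ hq0, zpow_neg, zpow_natCast]
        field_simp
        ring
      rw [this]; ring
  | succ P ih =>
    have e : (Finset.Icc (-(M : ℤ)) ((P + 1 : ℕ) : ℤ)).erase 0 =
        insert ((P : ℤ) + 1) ((Finset.Icc (-(M : ℤ)) (P : ℤ)).erase 0) := by
      ext l; simp; omega
    have hn : ((P : ℤ) + 1) ∉ ((Finset.Icc (-(M : ℤ)) (P : ℤ)).erase 0) := by
      simp
    rw [e, Finset.prod_insert hn, ih]
    have : Pn q (z * q) (P + 1) = Pn q (z * q) P * (1 - z * q ^ ((P : ℤ) + 1)) := by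
      rw [Pn, Pn, Finset.prod_range_succ, zpow_add_one₀ hq0, zpow_natCast]; ring
    rw [this]; ring

lemma Eprod_full {q z : ℂ} (hq0 : q ≠ 0) (hz : z ≠ 0) (M P : ℕ) :
    ∏ l ∈ (Finset.Icc (-(M : ℤ)) P), (1 - z * q ^ l) =
      (1 - z) * (kap q z M * Pn q (z * q) P * Pn q (q / z) M) := by
  have h0 : (0 : ℤ) ∈ Finset.Icc (-(M : ℤ)) P := by simp
  rw [← Eprod hq0 hz, ← Finset.mul_prod_erase _ _ h0]
  simp

lemma prod_shift {N M P : ℕ} {k : ℤ} (hM : (M : ℤ) = N - k) (hP : (P : ℤ) = N + k) (f : ℤ → ℂ) :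
    ∏ j ∈ Finset.Icc (-(N : ℤ)) N, f (j + k) = ∏ l ∈ Finset.Icc (-(M : ℤ)) P, f l := by
  refine Finset.prod_bij' (fun j _ => j + k) (fun l _ => l - k) ?_ ?_ ?_ ?_ ?_ <;>
    intro j <;> simp <;> omega

lemma prod_reflect {N M P : ℕ} {k : ℤ} (hM : (M : ℤ) = N - k) (hP : (P : ℤ) = N + k) (f : ℤ → ℂ) :
    ∏ j ∈ Finset.Icc (-(N : ℤ)) N, f (k - j) = ∏ l ∈ Finset.Icc (-(M : ℤ)) P, f l := by
  refine Finset.prod_bij' (fun j _ => k - j) (fun l _ => k - l) ?_ ?_ ?_ ?_ ?_ <;>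
    intro j <;> simp <;> omega

lemma prod_reflect_erase {N M P : ℕ} {k : ℤ} (hM : (M : ℤ) = N - k) (hP : (P : ℤ) = N + k)
    (f : ℤ → ℂ) :
    ∏ j ∈ (Finset.Icc (-(N : ℤ)) N).erase k, f (k - j) =
      ∏ l ∈ (Finset.Icc (-(M : ℤ)) P).erase 0, f l := by
  refine Finset.prod_bij' (fun j _ => k - j) (fun l _ => k - l) ?_ ?_ ?_ ?_ ?_ <;>
    intro j <;> simp <;> omega

lemma X_sub_Y {q a y : ℂ} (hq0 : q ≠ 0) (hy : y ≠ 0) (k j : ℤ) :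
    Xn q a k - Yn q a y j = q ^ (-k) * ((1 - y * q ^ (j + k)) * (1 - a / y * q ^ (k - j))) := by
  rw [Xn, Yn, zpow_add₀ hq0, zpow_sub₀ hq0, zpow_neg]
  field_simp
  ring

lemma X_sub_X {q a : ℂ} (hq0 : q ≠ 0) (k i : ℤ) :
    Xn q a k - Xn q a i = q ^ (-k) * ((1 - 1 * q ^ (k - i)) * (1 - a * q ^ (i + k))) := by
  rw [Xn, Xn, zpow_add₀ hq0, zpow_sub₀ hq0, zpow_neg, zpow_neg]
  field_simp
  ring

lemma q_zpow_ne_one {q : ℂ} (hq : ‖q‖ < 1) (hq0 : q ≠ 0) {k : ℤ} (hk : k ≠ 0) : q ^ k ≠ 1 := by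
  intro h
  have h2 : ‖q‖ ^ k = 1 := by rw [← norm_zpow, h, norm_one]
  have hpos : 0 < ‖q‖ := norm_pos_iff.2 hq0
  exact hk ((zpow_eq_one_iff_right₀ hpos.le hq.ne).1 h2)

lemma X_inj {q a : ℂ} (hq : ‖q‖ < 1) (hq0 : q ≠ 0) (ha : ∀ j : ℤ, a * q ^ j ≠ 1) :
    Function.Injective (Xn q a) := by
  intro k i h
  by_contra hne
  have h1 := X_sub_X (a := a) hq0 k i
  rw [h, sub_self] at h1
  have h2 : q ^ (-k) ≠ 0 := zpow_ne_zero _ hq0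
  have h3 : 1 - 1 * q ^ (k - i) ≠ 0 := fun h =>
    q_zpow_ne_one hq hq0 (sub_ne_zero.2 hne) (by linear_combination -h)
  have h4 : 1 - a * q ^ (i + k) ≠ 0 := fun h => ha _ (by linear_combination -h)
  exact (mul_ne_zero h2 (mul_ne_zero h3 h4)) h1.symm

/-- the finite weight ratio -/
noncomputable def RN (q a y : ℂ) (P M : ℕ) : ℂ :=
  Pn q (y * q) P * Pn q (q / y) M * Pn q (a / y * q) P * Pn q (q / (a / y)) M /
    (Pn q q P * Pn q q M * Pn q (a * q) P * Pn q (q / a) M)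

lemma W_eq {q a y : ℂ} (hq : ‖q‖ < 1) (hq0 : q ≠ 0) (ha0 : a ≠ 0) (ha : ∀ j : ℤ, a * q ^ j ≠ 1)
    (hy : y ≠ 0) {N M P : ℕ} {k : ℤ} (hM : (M : ℤ) = N - k) (hP : (P : ℤ) = N + k) :
    (∏ j ∈ Finset.Icc (-(N : ℤ)) N, (Xn q a k - Yn q a y j)) *
      (∏ i ∈ (Finset.Icc (-(N : ℤ)) N).erase k, (Xn q a k - Xn q a i))⁻¹ =
    q ^ (-k) * (1 - a * q ^ (2 * k)) * ((1 - y) * (1 - a / y) / (1 - a)) * RN q a y P M := by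
  set I := Finset.Icc (-(N : ℤ)) N with hI
  have hk : k ∈ I := by simp [hI]; omega
  have hX : ∀ k : ℤ, q ^ k ≠ 0 := fun k => zpow_ne_zero _ hq0
  have h1 : ∏ j ∈ I, (Xn q a k - Yn q a y j) = (q ^ (-k)) ^ I.card *
      (((1 - y) * (kap q y M * Pn q (y * q) P * Pn q (q / y) M)) *
      ((1 - a / y) * (kap q (a / y) M * Pn q (a / y * q) P * Pn q (q / (a / y)) M))) := by
    rw [← Eprod_full hq0 hy, ← Eprod_full hq0 (div_ne_zero ha0 hy),
      ← prod_shift hM hP, ← prod_reflect hM hP, ← Finset.prod_mul_distrib,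
      ← Finset.prod_const, ← Finset.prod_mul_distrib]
    exact Finset.prod_congr rfl fun j _ => X_sub_Y hq0 hy k j
  have h2 : (q ^ (-k) * (1 - a * q ^ (2 * k))) * ∏ i ∈ I.erase k, (Xn q a k - Xn q a i) =
      (q ^ (-k)) ^ I.card * ((kap q 1 M * Pn q (1 * q) P * Pn q (q / 1) M) *
      ((1 - a) * (kap q a M * Pn q (a * q) P * Pn q (q / a) M))) := by
    rw [← Eprod hq0 one_ne_zero, ← Eprod_full hq0 ha0, ← prod_reflect_erase hM hP,
      ← prod_shift hM hP, ← Finset.mul_prod_erase _ _ hk, ← Finset.prod_const,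
      ← Finset.mul_prod_erase _ _ hk]
    simp only [X_sub_X hq0, Finset.prod_mul_distrib]
    rw [two_mul]; ring
  have hkm := kap_mul q (x := y) (y := a / y) (z := 1) (w := a) (by field_simp) M
  have e2 : 1 - a * q ^ (2 * k) ≠ 0 := fun h => ha _ (by linear_combination -h)
  have e3 : 1 - a ≠ 0 := fun h => ha 0 (by simp; linear_combination -h)
  have p1 : ∀ n, Pn q q n ≠ 0 := Pn_ne_zero fun j => by
    have := q_zpow_ne_one hq hq0 (k := (j : ℤ) + 1) (by omega)
    rwa [zpow_add_one₀ hq0, zpow_natCast, mul_comm] at this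
  have p2 : Pn q (a * q) P ≠ 0 := Pn_ne_zero (fun j => by
    have := ha ((j : ℤ) + 1)
    rwa [zpow_add_one₀ hq0, zpow_natCast, mul_comm (q ^ j), ← mul_assoc] at this) _
  have p3 : Pn q (q / a) M ≠ 0 := Pn_ne_zero (fun j hj => by
    apply ha (-((j : ℤ) + 1))
    rw [zpow_neg, zpow_add_one₀ hq0, zpow_natCast]
    field_simp at hj ⊢
    rw [← hj]) _
  have k1 := kap_ne_zero hq0 one_ne_zero M
  have k2 := kap_ne_zero hq0 ha0 M
  have hne : ∏ i ∈ I.erase k, (Xn q a k - Xn q a i) ≠ 0 := by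
    rw [Finset.prod_ne_zero_iff]
    intro i hi
    rw [sub_ne_zero]
    exact fun h => (Finset.mem_erase.1 hi).1 (X_inj hq hq0 ha h).symm
  rw [← div_eq_mul_inv, div_eq_iff hne, h1]
  have : q ^ (-k) * (1 - a * q ^ (2 * k)) * ((1 - y) * (1 - a / y) / (1 - a)) * RN q a y P M *
      ∏ i ∈ I.erase k, (Xn q a k - Xn q a i) = ((1 - y) * (1 - a / y) / (1 - a)) * RN q a y P M *
      ((q ^ (-k) * (1 - a * q ^ (2 * k))) * ∏ i ∈ I.erase k, (Xn q a k - Xn q a i)) := by ring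
  rw [this, h2, RN, one_mul, div_one]
  have p4 := p1 P
  have p5 := p1 M
  have e : ∀ S K1 K2 K3 K4 A B C D E F G H u v w : ℂ, K1 * K2 = K3 * K4 → E ≠ 0 → F ≠ 0 → G ≠ 0 →
      H ≠ 0 → w ≠ 0 →
      S * ((u * (K1 * A * B)) * (v * (K2 * C * D))) =
      (u * v / w) * (A * B * C * D / (E * F * G * H)) * (S * ((K3 * E * F) * (w * (K4 * G * H)))) := by
    intro S K1 K2 K3 K4 A B C D E F G H u v w hK hE hF hG hH hw
    field_simp
    linear_combination (S * u * A * B * v * C * D) * hK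
  exact e _ _ _ _ _ _ _ _ _ _ _ _ _ _ _ _ hkm p4 p5 p2 p3 e3

lemma s_sub_Y {q a y B : ℂ} (hq0 : q ≠ 0) (hy : y ≠ 0) (hB : B ≠ 0) (j : ℤ) :
    (B + a / B) - Yn q a y j = B * ((1 - y / B * q ^ j) * (1 - a / (y * B) * q ^ (0 - j))) := by
  rw [Yn, zpow_sub₀ hq0, zpow_zero]
  have := zpow_ne_zero j hq0
  field_simp
  ring

lemma s_sub_X {q a B : ℂ} (hq0 : q ≠ 0) (hB : B ≠ 0) (j : ℤ) :
    (B + a / B) - Xn q a j = B * ((1 - 1 / B * q ^ (0 - j)) * (1 - a / B * q ^ (j + 0))) := by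
  rw [Xn, zpow_sub₀ hq0, zpow_zero, zpow_neg, add_zero]
  have := zpow_ne_zero j hq0
  field_simp
  ring

lemma RHS_eq {q a y B : ℂ} (hq0 : q ≠ 0) (ha0 : a ≠ 0)
    (hy : y ≠ 0) (hB : B ≠ 0) (hB1 : ∀ j : ℤ, B * q ^ j ≠ 1) (hB2 : ∀ j : ℤ, a / B * q ^ j ≠ 1)
    (N : ℕ) :
    (∏ j ∈ (Finset.Icc (-(N : ℤ)) N).erase 0, ((B + a / B) - Yn q a y j)) *
      (∏ i ∈ (Finset.Icc (-(N : ℤ)) N), ((B + a / B) - Xn q a i))⁻¹ =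
    (B * (1 - 1 / B) * (1 - a / B))⁻¹ *
     (Pn q (y / B * q) N * Pn q (q / (y / B)) N * Pn q (a / (y * B) * q) N *
        Pn q (q / (a / (y * B))) N /
      (Pn q (1 / B * q) N * Pn q (q / (1 / B)) N * Pn q (a / B * q) N * Pn q (q / (a / B)) N)) := by
  set I := Finset.Icc (-(N : ℤ)) N with hI
  have h0 : (0 : ℤ) ∈ I := by simp [hI]
  have hM : (N : ℤ) = N - 0 := by simp
  have hP : (N : ℤ) = N + 0 := by simp
  have h1 : ∏ j ∈ I.erase 0, ((B + a / B) - Yn q a y j) = B ^ (I.erase 0).card *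
      (((kap q (y / B) N * Pn q (y / B * q) N * Pn q (q / (y / B)) N)) *
      ((kap q (a / (y * B)) N * Pn q (a / (y * B) * q) N * Pn q (q / (a / (y * B))) N))) := by
    rw [← Eprod hq0 (div_ne_zero hy hB), ← Eprod hq0 (div_ne_zero ha0 (mul_ne_zero hy hB)),
      ← prod_reflect_erase hM hP (fun l => 1 - a / (y * B) * q ^ l), ← Finset.prod_mul_distrib,
      ← Finset.prod_const, ← Finset.prod_mul_distrib]
    exact Finset.prod_congr rfl fun j _ => s_sub_Y hq0 hy hB j
  have h2 : ∏ j ∈ I, ((B + a / B) - Xn q a j) = B ^ (I.erase 0).card * (B *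
      ((1 - 1 / B) * (kap q (1 / B) N * Pn q (1 / B * q) N * Pn q (q / (1 / B)) N)) *
      ((1 - a / B) * (kap q (a / B) N * Pn q (a / B * q) N * Pn q (q / (a / B)) N))) := by
    have : B ^ (I.erase 0).card * B = B ^ I.card := by
      rw [← pow_succ, Finset.card_erase_add_one h0]
    have r : ∀ S A D : ℂ, S * (B * A * D) = (S * B) * (A * D) := by intros; ring
    rw [r, this]
    rw [← Eprod_full hq0 (div_ne_zero one_ne_zero hB), ← Eprod_full hq0 (div_ne_zero ha0 hB),
      ← prod_reflect hM hP (fun l => 1 - 1 / B * q ^ l),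
      ← prod_shift hM hP (fun l => 1 - a / B * q ^ l), ← Finset.prod_const,
      ← Finset.prod_mul_distrib, ← Finset.prod_mul_distrib]
    exact Finset.prod_congr rfl fun j _ => s_sub_X hq0 hB j
  have hkm := kap_mul q (x := y / B) (y := a / (y * B)) (z := 1 / B) (w := a / B)
    (by field_simp) N
  rw [h1, h2]
  have k1 := kap_ne_zero hq0 (div_ne_zero one_ne_zero hB) N
  have k2 := kap_ne_zero hq0 (div_ne_zero ha0 hB) N
  have e1 : ∀ j : ℤ, 1 / B * q ^ j ≠ 1 := by
    intro j h
    apply hB1 (-j)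
    have := zpow_ne_zero j hq0
    rw [zpow_neg]
    field_simp at h ⊢
    exact h.symm
  have p1 : Pn q (1 / B * q) N ≠ 0 := Pn_ne_zero (fun j => by
    have := e1 ((j : ℤ) + 1)
    rwa [zpow_add_one₀ hq0, zpow_natCast, mul_comm (q ^ j), ← mul_assoc] at this) _
  have p2 : Pn q (q / (1 / B)) N ≠ 0 := Pn_ne_zero (fun j => by
    have := hB1 ((j : ℤ) + 1)
    rw [zpow_add_one₀ hq0, zpow_natCast, mul_comm (q ^ j), ← mul_assoc] at this
    simpa [mul_comm B q] using this) _
  have p3 : Pn q (a / B * q) N ≠ 0 := Pn_ne_zero (fun j => by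
    have := hB2 ((j : ℤ) + 1)
    rwa [zpow_add_one₀ hq0, zpow_natCast, mul_comm (q ^ j), ← mul_assoc] at this) _
  have p4 : Pn q (q / (a / B)) N ≠ 0 := Pn_ne_zero (fun j hj => by
    apply hB2 (-((j : ℤ) + 1))
    rw [zpow_neg, zpow_add_one₀ hq0, zpow_natCast]
    field_simp at hj ⊢
    rw [← hj]) _
  have e2 : 1 - 1 / B ≠ 0 := fun h => e1 0 (by rw [zpow_zero, mul_one]; linear_combination -h)
  have e3 : 1 - a / B ≠ 0 := fun h => hB2 0 (by rw [zpow_zero, mul_one]; linear_combination -h)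
  have hS : B ^ (I.erase 0).card ≠ 0 := pow_ne_zero _ hB
  have e : ∀ S K1 K2 K3 K4 A B' C D E F G H u v : ℂ, K1 * K2 = K3 * K4 → E ≠ 0 → F ≠ 0 → G ≠ 0 →
      H ≠ 0 → u ≠ 0 → v ≠ 0 → S ≠ 0 → K3 ≠ 0 → K4 ≠ 0 →
      S * ((K1 * A * B') * (K2 * C * D)) *
        (S * (B * (u * (K3 * E * F)) * (v * (K4 * G * H))))⁻¹ =
      (B * u * v)⁻¹ * (A * B' * C * D / (E * F * G * H)) := by
    intro S K1 K2 K3 K4 A B' C D E F G H u v hK hE hF hG hH hu hv hS hK3 hK4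
    field_simp
    linear_combination (A * B' * C * D) * hK
  exact e _ _ _ _ _ _ _ _ _ _ _ _ _ _ _ hkm p1 p2 p3 p4 e2 e3 hS k1 k2

lemma lagrange {I : Finset ℤ} {v : ℤ → ℂ} (hv : Set.InjOn v I) {f : Polynomial ℂ}
    (hf : f.degree < I.card) {s : ℂ} (hs : ∀ i ∈ I, s ≠ v i) :
    f.eval s * (∏ i ∈ I, (s - v i))⁻¹ =
      ∑ k ∈ I, (∏ i ∈ I.erase k, (v k - v i))⁻¹ * (s - v k)⁻¹ * f.eval (v k) := by
  have h := Lagrange.eq_interpolate hv hf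
  have h2 := Lagrange.eval_interpolate_not_at_node (r := fun i => f.eval (v i)) hs
  rw [← h, Lagrange.eval_nodal] at h2
  have h0 : ∏ i ∈ I, (s - v i) ≠ 0 := Finset.prod_ne_zero_iff.2 fun i hi => sub_ne_zero.2 (hs i hi)
  rw [h2, mul_right_comm, mul_inv_cancel₀ h0, one_mul]
  refine Finset.sum_congr rfl fun k _ => ?_
  rw [Lagrange.nodalWeight, Finset.prod_inv_distrib]

lemma q_pow_ne {q : ℂ} (hq : ‖q‖ < 1) (hq0 : q ≠ 0) (j : ℕ) : q * q ^ j ≠ 1 := by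
  have := q_zpow_ne_one hq hq0 (k := (j : ℤ) + 1) (by omega)
  rwa [zpow_add_one₀ hq0, zpow_natCast, mul_comm] at this

lemma mul_q_ne {q z : ℂ} (hq0 : q ≠ 0) (hz : ∀ j : ℤ, z * q ^ j ≠ 1) (j : ℕ) :
    z * q * q ^ j ≠ 1 := by
  have := hz ((j : ℤ) + 1)
  rwa [zpow_add_one₀ hq0, zpow_natCast, mul_comm (q ^ j), ← mul_assoc] at this

lemma q_div_ne {q z : ℂ} (hq0 : q ≠ 0) (hz0 : z ≠ 0) (hz : ∀ j : ℤ, z * q ^ j ≠ 1) (j : ℕ) :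
    q / z * q ^ j ≠ 1 := fun hj => by
  apply hz (-((j : ℤ) + 1))
  rw [zpow_neg, zpow_add_one₀ hq0, zpow_natCast]
  field_simp at hj ⊢
  rw [← hj]

lemma th'_ne_zero {q z : ℂ} (hq : ‖q‖ < 1) (hq0 : q ≠ 0) (hz0 : z ≠ 0)
    (hz : ∀ j : ℤ, z * q ^ j ≠ 1) : th' q z ≠ 0 :=
  mul_ne_zero (qPochInf_ne_zero hq (mul_q_ne hq0 hz)) (qPochInf_ne_zero hq (q_div_ne hq0 hz0 hz))

noncomputable def Lc (q a y : ℂ) : ℂ :=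
  th' q y * th' q (a / y) / (qPochInf q q * qPochInf q q * th' q a)

lemma RN_lim {q a : ℂ} (hq : ‖q‖ < 1) (hq0 : q ≠ 0) (ha0 : a ≠ 0) (ha : ∀ j : ℤ, a * q ^ j ≠ 1)
    (y : ℂ) (k : ℤ) :
    Tendsto (fun N : ℕ => RN q a y ((N : ℤ) + k).toNat ((N : ℤ) - k).toNat) atTop
      (𝓝 (Lc q a y)) := by
  have tP : Tendsto (fun N : ℕ => ((N : ℤ) + k).toNat) atTop atTop := by
    rw [tendsto_atTop]; intro b
    filter_upwards [eventually_ge_atTop (b + k.natAbs)] with N hN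
    omega
  have tM : Tendsto (fun N : ℕ => ((N : ℤ) - k).toNat) atTop atTop := by
    rw [tendsto_atTop]; intro b
    filter_upwards [eventually_ge_atTop (b + k.natAbs)] with N hN
    omega
  have hP := fun z => (Pn_tendsto hq z).comp tP
  have hM := fun z => (Pn_tendsto hq z).comp tM
  have hne : qPochInf q q * qPochInf q q * qPochInf (a * q) q * qPochInf (q / a) q ≠ 0 := by
    have h1 := qPochInf_ne_zero hq (q_pow_ne hq hq0)
    have h2 := qPochInf_ne_zero hq (mul_q_ne hq0 ha)
    have h3 := qPochInf_ne_zero hq (q_div_ne hq0 ha0 ha)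
    positivity
  have := ((((hP (y * q)).mul (hM (q / y))).mul (hP (a / y * q))).mul (hM (q / (a / y)))).div
    ((((hP q).mul (hM q)).mul (hP (a * q))).mul (hM (q / a))) hne
  convert! this using 2
  rw [Lc, th', th', th']
  ring

lemma RN_bdd {q a : ℂ} (hq : ‖q‖ < 1) (hq0 : q ≠ 0) (ha0 : a ≠ 0) (ha : ∀ j : ℤ, a * q ^ j ≠ 1)
    (y : ℂ) : ∃ C : ℝ, 0 ≤ C ∧ ∀ P M, ‖RN q a y P M‖ ≤ C := by
  obtain ⟨c1, h1, k1⟩ := Pn_bdd hq (y * q)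
  obtain ⟨c2, h2, k2⟩ := Pn_bdd hq (q / y)
  obtain ⟨c3, h3, k3⟩ := Pn_bdd hq (a / y * q)
  obtain ⟨c4, h4, k4⟩ := Pn_bdd hq (q / (a / y))
  obtain ⟨c5, h5, k5⟩ := Pn_inv_bdd hq (q_pow_ne hq hq0)
  obtain ⟨c6, h6, k6⟩ := Pn_inv_bdd hq (mul_q_ne hq0 ha)
  obtain ⟨c7, h7, k7⟩ := Pn_inv_bdd hq (q_div_ne hq0 ha0 ha)
  refine ⟨c1 * c2 * c3 * c4 * (c5 * c5 * c6 * c7), by positivity, fun P M => ?_⟩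
  rw [RN, div_eq_mul_inv, mul_inv, mul_inv, mul_inv]
  simp only [norm_mul]
  gcongr
  · exact k1 P
  · exact k2 M
  · exact k3 P
  · exact k4 M
  · exact k5 P
  · exact k5 M
  · exact k6 P
  · exact k7 M

lemma sum_lim {q a : ℂ} (hq : ‖q‖ < 1) (hq0 : q ≠ 0) (ha0 : a ≠ 0) (ha : ∀ j : ℤ, a * q ^ j ≠ 1)
    (y : ℂ) {t : ℤ → ℂ} (ht : Summable t) :
    Tendsto (fun N : ℕ => ∑ k ∈ Finset.Icc (-(N : ℤ)) N,
      RN q a y ((N : ℤ) + k).toNat ((N : ℤ) - k).toNat * t k) atTop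
      (𝓝 (Lc q a y * ∑' k, t k)) := by
  obtain ⟨C, hC, hb⟩ := RN_bdd hq hq0 ha0 ha y
  rw [← tsum_mul_left]
  have h := tendsto_tsum_of_dominated_convergence (𝓕 := atTop)
    (f := fun (N : ℕ) (k : ℤ) => if k ∈ Finset.Icc (-(N : ℤ)) N then
      RN q a y ((N : ℤ) + k).toNat ((N : ℤ) - k).toNat * t k else 0)
    (g := fun k => Lc q a y * t k) (bound := fun k => C * ‖t k‖) (ht.norm.mul_left C) ?_ ?_
  · refine h.congr fun N => ?_
    rw [tsum_eq_sum (s := Finset.Icc (-(N : ℤ)) N)]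
    · exact Finset.sum_congr rfl fun k hk => by rw [if_pos hk]
    · intro k hk; rw [if_neg hk]
  · intro k
    refine ((RN_lim hq hq0 ha0 ha y k).mul_const (t k)).congr' ?_
    filter_upwards [eventually_ge_atTop k.natAbs] with N hN
    rw [if_pos]
    simp; omega
  · refine Eventually.of_forall fun N k => ?_
    split_ifs
    · rw [norm_mul]; gcongr; exact hb _ _
    · simp; positivity

lemma X_sub_Y_ne {q a y : ℂ} (hq0 : q ≠ 0) (hy : y ≠ 0) (hy1 : ∀ j : ℤ, y * q ^ j ≠ 1)
    (hy2 : ∀ j : ℤ, a / y * q ^ j ≠ 1) (k j : ℤ) : Xn q a k - Yn q a y j ≠ 0 := by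
  rw [X_sub_Y hq0 hy]
  exact mul_ne_zero (zpow_ne_zero _ hq0) (mul_ne_zero (fun h => hy1 _ (by linear_combination -h))
    (fun h => hy2 _ (by linear_combination -h)))

lemma diag_sum {q a y B : ℂ} (hq : ‖q‖ < 1) (hq0 : q ≠ 0) (ha0 : a ≠ 0)
    (ha : ∀ j : ℤ, a * q ^ j ≠ 1) (hy : y ≠ 0) (hB : B ≠ 0)
    (hy1 : ∀ j : ℤ, y * q ^ j ≠ 1) (hy2 : ∀ j : ℤ, a / y * q ^ j ≠ 1)
    (hB1 : ∀ j : ℤ, B * q ^ j ≠ 1) (hB2 : ∀ j : ℤ, a / B * q ^ j ≠ 1) {t : ℤ → ℂ}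
    (ht : Summable t)
    (htk : ∀ k, t k = q ^ k * (1 - a * q ^ (2 * k)) / (((1 - y * q ^ k) * (1 - a / y * q ^ k)) *
      ((1 - B * q ^ k) * (1 - a / B * q ^ k)))) :
    -((1 - y) * (1 - a / y) / (1 - a)) * (Lc q a y * ∑' k, t k) =
      (B * (1 - 1 / B) * (1 - a / B))⁻¹ *
        (th' q (y / B) * th' q (a / (y * B)) / (th' q (1 / B) * th' q (a / B))) := by
  have e1 : ∀ j : ℤ, 1 / B * q ^ j ≠ 1 := by
    intro j h
    apply hB1 (-j)
    have := zpow_ne_zero j hq0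
    rw [zpow_neg]
    field_simp at h ⊢
    exact h.symm
  have lim1 := (sum_lim hq hq0 ha0 ha y ht).const_mul (-((1 - y) * (1 - a / y) / (1 - a)))
  have hP := fun z => (Pn_tendsto hq z)
  have hne : qPochInf (1 / B * q) q * qPochInf (q / (1 / B)) q * qPochInf (a / B * q) q *
      qPochInf (q / (a / B)) q ≠ 0 := by
    have h1 := th'_ne_zero hq hq0 (div_ne_zero one_ne_zero hB) e1
    have h2 := th'_ne_zero hq hq0 (by positivity) hB2
    rw [th'] at h1 h2
    rw [mul_assoc]
    exact mul_ne_zero h1 h2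
  have lim2 := (((((hP (y / B * q)).mul (hP (q / (y / B)))).mul (hP (a / (y * B) * q))).mul
    (hP (q / (a / (y * B))))).div
    ((((hP (1 / B * q)).mul (hP (q / (1 / B)))).mul (hP (a / B * q))).mul (hP (q / (a / B))))
    hne).const_mul (B * (1 - 1 / B) * (1 - a / B))⁻¹
  have : (B * (1 - 1 / B) * (1 - a / B))⁻¹ *
        (th' q (y / B) * th' q (a / (y * B)) / (th' q (1 / B) * th' q (a / B))) =
      (B * (1 - 1 / B) * (1 - a / B))⁻¹ *
     (qPochInf (y / B * q) q * qPochInf (q / (y / B)) q * qPochInf (a / (y * B) * q) q *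
        qPochInf (q / (a / (y * B))) q /
      (qPochInf (1 / B * q) q * qPochInf (q / (1 / B)) q * qPochInf (a / B * q) q *
        qPochInf (q / (a / B)) q)) := by
    simp only [th']; ring
  rw [this]
  refine tendsto_nhds_unique lim1 (lim2.congr fun N => ?_)
  simp only [Pi.div_apply]
  rw [← RHS_eq hq0 ha0 hy hB hB1 hB2 N]
  set I := Finset.Icc (-(N : ℤ)) N with hI
  have h0 : (0 : ℤ) ∈ I := by simp [hI]
  have hYB : B + a / B = Yn q a B 0 := by simp [Yn]
  have hl := lagrange (I := I) (v := Xn q a) (X_inj hq hq0 ha).injOn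
    (f := ∏ j ∈ I.erase 0, (Polynomial.X - Polynomial.C (Yn q a y j))) (by
      rw [Polynomial.degree_prod]
      simp only [Polynomial.degree_X_sub_C, Finset.sum_const, nsmul_eq_mul, mul_one]
      exact_mod_cast Finset.card_erase_lt_of_mem h0) (s := B + a / B) (by
      intro i _ h
      rw [hYB] at h
      exact X_sub_Y_ne hq0 hB hB1 hB2 i 0 (by rw [h, sub_self]))
  simp only [Polynomial.eval_prod, Polynomial.eval_sub, Polynomial.eval_X, Polynomial.eval_C] at hl
  rw [hl, Finset.mul_sum]
  refine Finset.sum_congr rfl fun k hk => ?_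
  have hk' : -(N : ℤ) ≤ k ∧ k ≤ N := by simpa [hI] using hk
  have hW := W_eq hq hq0 ha0 ha hy (N := N) (M := ((N : ℤ) - k).toNat) (P := ((N : ℤ) + k).toNat)
    (k := k) (by omega) (by omega)
  rw [← hI, ← Finset.mul_prod_erase _ _ h0] at hW
  have n1 := X_sub_Y_ne hq0 hy hy1 hy2 k 0
  have n2 := X_sub_Y_ne hq0 hB hB1 hB2 k 0
  have x1 := X_sub_Y hq0 (a := a) hy k 0
  have x2 := X_sub_Y hq0 (a := a) hB k 0
  rw [htk, hYB]
  have n2' : Yn q a B 0 - Xn q a k ≠ 0 := by rw [← neg_sub]; exact neg_ne_zero.2 n2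
  have hs : (∏ i ∈ I.erase k, (Xn q a k - Xn q a i))⁻¹ * (Yn q a B 0 - Xn q a k)⁻¹ *
      ∏ x ∈ I.erase 0, (Xn q a k - Yn q a y x) =
      -((Xn q a k - Yn q a y 0) * (Xn q a k - Yn q a B 0))⁻¹ *
      ((Xn q a k - Yn q a y 0) * (∏ x ∈ I.erase 0, (Xn q a k - Yn q a y x)) *
      (∏ i ∈ I.erase k, (Xn q a k - Xn q a i))⁻¹) := by
    rw [← neg_sub (Xn q a k) (Yn q a B 0), inv_neg, mul_inv]
    field_simp
  rw [hs, hW, x1, x2]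
  rw [x1] at n1
  rw [x2] at n2
  simp only [zero_add, sub_zero] at n1 n2 ⊢
  have hqk := zpow_ne_zero k hq0
  rw [zpow_neg] at n1 n2 ⊢
  have m1 := right_ne_zero_of_mul n1
  have m2 := right_ne_zero_of_mul n2
  generalize (1 - y * q ^ k) * (1 - a / y * q ^ k) = u at *
  generalize (1 - B * q ^ k) * (1 - a / B * q ^ k) = v at *
  generalize (1 - y) * (1 - a / y) / (1 - a) = w at *
  field_simp

lemma offdiag_sum {q a b c : ℂ} (hq : ‖q‖ < 1) (hq0 : q ≠ 0) (ha0 : a ≠ 0)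
    (ha : ∀ j : ℤ, a * q ^ j ≠ 1) (hb : b ≠ 0) (hc : c ≠ 0)
    (hc1 : ∀ j : ℤ, c * q ^ j ≠ 1) (hc2 : ∀ j : ℤ, a / c * q ^ j ≠ 1) (m : ℤ) (r : ℕ) {t : ℤ → ℂ}
    (ht : Summable t)
    (htk : ∀ k, t k = q ^ k * (1 - a * q ^ (2 * k)) *
      (∏ i ∈ Finset.range r, ((1 - b * q ^ (m + 1 + i + k)) * (1 - a / b * q ^ (k - (m + 1 + i))))) /
      (∏ i ∈ Finset.range (r + 2), ((1 - c * q ^ (m + i + k)) * (1 - a / c * q ^ (k - (m + i)))))) :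
    ∑' k, t k = 0 := by
  have hw : (1 - c) * (1 - a / c) / (1 - a) ≠ 0 := by
    have e0 : 1 - a ≠ 0 := fun h => ha 0 (by rw [zpow_zero, mul_one]; linear_combination -h)
    have e1 : 1 - c ≠ 0 := fun h => hc1 0 (by rw [zpow_zero, mul_one]; linear_combination -h)
    have e2 : 1 - a / c ≠ 0 := fun h => hc2 0 (by rw [zpow_zero, mul_one]; linear_combination -h)
    exact div_ne_zero (mul_ne_zero e1 e2) e0
  have lim1 := (sum_lim hq hq0 ha0 ha c ht).const_mul (-((1 - c) * (1 - a / c) / (1 - a)))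
  have hL : Lc q a c ≠ 0 := by
    have h1 := qPochInf_ne_zero hq (q_pow_ne hq hq0)
    have h2 := th'_ne_zero hq hq0 ha0 ha
    have h3 := th'_ne_zero hq hq0 hc hc1
    have h4 := th'_ne_zero hq hq0 (by positivity) hc2
    rw [Lc]; positivity
  have key : -((1 - c) * (1 - a / c) / (1 - a)) * (Lc q a c * ∑' k, t k) = 0 := by
    refine tendsto_nhds_unique lim1 (tendsto_const_nhds.congr' ?_)
    filter_upwards [eventually_ge_atTop (m.natAbs + r + 2)] with N hN
    set I := Finset.Icc (-(N : ℤ)) N with hI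
    set J := (Finset.range (r + 2)).image (fun i : ℕ => m + (i : ℤ)) with hJ
    have hinj : Set.InjOn (fun i : ℕ => m + (i : ℤ)) (Finset.range (r + 2)) := by
      intro i _ j _ h; simpa using h
    have hJI : J ⊆ I := by
      intro j hj
      simp only [hJ, Finset.mem_image, Finset.mem_range] at hj
      obtain ⟨i, hi, rfl⟩ := hj
      simp only [hI, Finset.mem_Icc]; omega
    have hJc : J.card = r + 2 := by
      rw [hJ, Finset.card_image_of_injOn hinj, Finset.card_range]
    have hIJ : (I \ J).card + J.card = I.card := Finset.card_sdiff_add_card_eq_card hJI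
    have hl := lagrange (I := I) (v := Xn q a) (X_inj hq hq0 ha).injOn
      (f := (∏ j ∈ I \ J, (Polynomial.X - Polynomial.C (Yn q a c j))) *
        (∏ i ∈ Finset.range r, (Polynomial.X - Polynomial.C (Yn q a b (m + 1 + i)))) *
        (Polynomial.X - Polynomial.C (Yn q a c m))) (by
        rw [Polynomial.degree_mul, Polynomial.degree_mul, Polynomial.degree_prod,
          Polynomial.degree_prod]
        simp only [Polynomial.degree_X_sub_C, Finset.sum_const, nsmul_eq_mul, mul_one,
          Finset.card_range]
        have : (I \ J).card + r + 1 < I.card := by omega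
        exact_mod_cast this) (s := Yn q a c m) (by
        intro i _ h
        exact X_sub_Y_ne hq0 hc hc1 hc2 i m (by rw [h, sub_self]))
    simp only [Polynomial.eval_mul, Polynomial.eval_prod, Polynomial.eval_sub, Polynomial.eval_X,
      Polynomial.eval_C, sub_self, mul_zero, zero_mul] at hl
    rw [hl, Finset.mul_sum]
    refine Finset.sum_congr rfl fun k hk => ?_
    have hk' : -(N : ℤ) ≤ k ∧ k ≤ N := by simpa [hI] using hk
    have hW := W_eq hq hq0 ha0 ha hc (N := N) (M := ((N : ℤ) - k).toNat)
      (P := ((N : ℤ) + k).toNat) (k := k) (by omega) (by omega)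
    rw [← hI, ← Finset.prod_sdiff hJI] at hW
    have hJp : ∏ j ∈ J, (Xn q a k - Yn q a c j) = (q ^ (-k)) ^ (r + 2) *
        ∏ i ∈ Finset.range (r + 2), ((1 - c * q ^ (m + i + k)) * (1 - a / c * q ^ (k - (m + i)))) := by
      rw [hJ, Finset.prod_image hinj]
      simp only [X_sub_Y hq0 hc]
      rw [Finset.prod_mul_distrib, Finset.prod_const, Finset.card_range]
    have hJb : ∏ i ∈ Finset.range r, (Xn q a k - Yn q a b (m + 1 + i)) = (q ^ (-k)) ^ r *
        ∏ i ∈ Finset.range r,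
          ((1 - b * q ^ (m + 1 + i + k)) * (1 - a / b * q ^ (k - (m + 1 + i)))) := by
      simp only [X_sub_Y hq0 hb]
      rw [Finset.prod_mul_distrib, Finset.prod_const, Finset.card_range]
    have hJne : ∏ j ∈ J, (Xn q a k - Yn q a c j) ≠ 0 :=
      Finset.prod_ne_zero_iff.2 fun j _ => X_sub_Y_ne hq0 hc hc1 hc2 k j
    have hs := X_sub_Y_ne hq0 hc hc1 hc2 k m
    rw [hJb, htk k]
    rw [hJp] at hW hJne
    have hqk := zpow_ne_zero k hq0
    have hD := right_ne_zero_of_mul hJne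
    rw [zpow_neg] at hW hJne ⊢
    rw [← neg_sub (Xn q a k) (Yn q a c m), inv_neg]
    generalize ∏ i ∈ Finset.range (r + 2),
      ((1 - c * q ^ (m + i + k)) * (1 - a / c * q ^ (k - (m + i)))) = D at *
    generalize ∏ i ∈ Finset.range r,
      ((1 - b * q ^ (m + 1 + i + k)) * (1 - a / b * q ^ (k - (m + 1 + i)))) = A at *
    generalize (∏ i ∈ I.erase k, (Xn q a k - Xn q a i))⁻¹ = E at *
    generalize ∏ j ∈ I \ J, (Xn q a k - Yn q a c j) = G at *
    generalize (1 - c) * (1 - a / c) / (1 - a) = w at *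
    generalize Xn q a k - Yn q a c m = s at *
    generalize RN q a c _ _ = R at *
    generalize q ^ k = x at *
    generalize 1 - a * q ^ (2 * k) = u at *
    have hG : G * E = x⁻¹ * u * w * R / (x⁻¹ ^ (r + 2) * D) := by
      rw [eq_div_iff hJne]; linear_combination hW
    have : E * -s⁻¹ * (G * (x⁻¹ ^ r * A) * s) = -(G * E) * (x⁻¹ ^ r * A) := by
      field_simp
    rw [this, hG]
    rw [pow_add]
    field_simp
  rcases mul_eq_zero.1 key with h | h
  · exact absurd h (neg_ne_zero.2 hw)
  · exact (mul_eq_zero.1 h).resolve_left hL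

lemma cexp_zpow (θ : ℝ) (k : ℤ) : Complex.exp ((θ : ℂ) * Complex.I) ^ k =
    Complex.exp (((k : ℂ) * Complex.I) * θ) := by
  rw [← Complex.exp_int_mul]; congr 1; ring

lemma norm_cexp_zpow (θ : ℝ) (k : ℤ) : ‖Complex.exp ((θ : ℂ) * Complex.I) ^ k‖ = 1 := by
  rw [norm_zpow, Complex.norm_exp_ofReal_mul_I, one_zpow]

lemma cont_cexp_zpow (k : ℤ) :
    Continuous (fun θ : ℝ => Complex.exp ((θ : ℂ) * Complex.I) ^ k) := by
  simp only [cexp_zpow]; fun_prop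

lemma integral_tsum_aux {u : ℤ → ℂ} (hu : Summable u) {φ : ℤ → ℝ → ℂ} (hφ : ∀ k, Continuous (φ k))
    {C : ℝ} (hC : ∀ k θ, ‖φ k θ‖ ≤ C) :
    ∫ θ in (0 : ℝ)..(2 * Real.pi), ∑' k, u k * φ k θ =
      ∑' k, u k * ∫ θ in (0 : ℝ)..(2 * Real.pi), φ k θ := by
  have hb : ∀ k θ, ‖u k * φ k θ‖ ≤ ‖u k‖ * C := fun k θ => by
    rw [norm_mul]; gcongr; exact hC k θ
  have h := intervalIntegral.hasSum_integral_of_dominated_convergence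
    (μ := MeasureTheory.volume) (a := (0 : ℝ)) (b := 2 * Real.pi)
    (F := fun k θ => u k * φ k θ) (f := fun θ => ∑' k, u k * φ k θ)
    (fun k _ => ‖u k‖ * C)
    (fun k => ((continuous_const.mul (hφ k)).aestronglyMeasurable))
    (fun k => MeasureTheory.ae_of_all _ fun θ _ => hb k θ)
    (MeasureTheory.ae_of_all _ fun θ _ => hu.norm.mul_right C)
    (by simp)
    (MeasureTheory.ae_of_all _ fun θ _ =>
      (Summable.of_norm_bounded (hu.norm.mul_right C) fun k => hb k θ).hasSum)
  rw [← h.tsum_eq]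
  refine tsum_congr fun k => ?_
  rw [intervalIntegral.integral_const_mul]

lemma integral_cexp (k : ℤ) :
    ∫ θ in (0 : ℝ)..(2 * Real.pi), Complex.exp ((θ : ℂ) * Complex.I) ^ k =
      if k = 0 then 2 * (Real.pi : ℂ) else 0 := by
  split_ifs with h
  · subst h; simp
  · simp only [cexp_zpow]
    have hk : (k : ℂ) * Complex.I ≠ 0 := mul_ne_zero (by exact_mod_cast h) Complex.I_ne_zero
    rw [integral_exp_mul_complex hk]
    have : (k : ℂ) * Complex.I * ((2 * Real.pi : ℝ) : ℂ) = k * (2 * Real.pi * Complex.I) := by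
      push_cast; ring
    rw [this, Complex.exp_int_mul_two_pi_mul_I]
    simp

lemma parseval {u v : ℤ → ℂ} (hu : Summable u) (hv : Summable v) :
    (1 / (2 * (Real.pi : ℂ))) * ∫ θ in (0 : ℝ)..(2 * Real.pi),
      (∑' k, u k * Complex.exp ((θ : ℂ) * Complex.I) ^ k) *
        (starRingEnd ℂ) (∑' k, v k * Complex.exp ((θ : ℂ) * Complex.I) ^ k) =
      ∑' k, u k * (starRingEnd ℂ) (v k) := by
  set e : ℤ → ℝ → ℂ := fun k θ => Complex.exp ((θ : ℂ) * Complex.I) ^ k with he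
  have hec : ∀ k, Continuous (e k) := cont_cexp_zpow
  have hen : ∀ k θ, ‖e k θ‖ = 1 := fun k θ => norm_cexp_zpow θ k
  set G : ℝ → ℂ := fun θ => (starRingEnd ℂ) (∑' k, v k * e k θ) with hG
  have hvb : ∀ k θ, ‖v k * e k θ‖ ≤ ‖v k‖ := fun k θ => by rw [norm_mul, hen, mul_one]
  have hGc : Continuous G := by
    refine Complex.continuous_conj.comp ?_
    exact continuous_tsum (fun k => continuous_const.mul (hec k)) hv.norm hvb
  have hGb : ∀ θ, ‖G θ‖ ≤ ∑' k, ‖v k‖ := fun θ => by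
    change ‖(starRingEnd ℂ) (∑' k, v k * e k θ)‖ ≤ _
    rw [RCLike.norm_conj]
    exact tsum_of_norm_bounded hv.norm.hasSum fun k => hvb k θ
  have h1 : ∫ θ in (0 : ℝ)..(2 * Real.pi), (∑' k, u k * e k θ) * G θ =
      ∑' k, u k * ∫ θ in (0 : ℝ)..(2 * Real.pi), e k θ * G θ := by
    rw [← integral_tsum_aux hu (φ := fun k θ => e k θ * G θ) (fun k => (hec k).mul hGc)
      (C := ∑' k, ‖v k‖) (fun k θ => by rw [norm_mul, hen, one_mul]; exact hGb θ)]
    refine intervalIntegral.integral_congr fun θ _ => ?_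
    change (∑' k, u k * e k θ) * G θ = ∑' k, u k * (e k θ * G θ)
    rw [← tsum_mul_right]
    exact tsum_congr fun k => by ring
  have hconj : ∀ l θ, (starRingEnd ℂ) (e l θ) = e (-l) θ := by
    intro l θ
    simp only [he]
    rw [map_zpow₀, ← Complex.exp_conj, zpow_neg, ← inv_zpow, ← Complex.exp_neg]
    simp
  have h2 : ∀ k, ∫ θ in (0 : ℝ)..(2 * Real.pi), e k θ * G θ =
      2 * (Real.pi : ℂ) * (starRingEnd ℂ) (v k) := by
    intro k
    have hcv : Summable (fun l => (starRingEnd ℂ) (v l)) := by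
      refine Summable.of_norm ?_
      simpa using hv.norm
    have : ∀ θ, e k θ * G θ = ∑' l, (starRingEnd ℂ) (v l) * e (k - l) θ := by
      intro θ
      rw [hG]
      simp only
      rw [Complex.conj_tsum, ← tsum_mul_left]
      refine tsum_congr fun l => ?_
      rw [map_mul, hconj]
      have : e (k - l) θ = e k θ * e (-l) θ := by
        simp only [he]
        rw [sub_eq_add_neg, zpow_add₀ (Complex.exp_ne_zero _)]
      rw [this]; ring
    simp only [this]
    rw [integral_tsum_aux hcv (φ := fun l θ => e (k - l) θ) (fun l => hec _) (C := 1)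
      (fun l θ => (hen _ _).le)]
    rw [tsum_eq_single k]
    · rw [he]; simp only; rw [integral_cexp]; simp; ring
    · intro l hl
      rw [he]; simp only; rw [integral_cexp, if_neg (sub_ne_zero.2 hl.symm), mul_zero]
  rw [h1]
  simp only [h2]
  rw [← tsum_mul_left]
  have hpi : (Real.pi : ℂ) ≠ 0 := by exact_mod_cast Real.pi_ne_zero
  refine tsum_congr fun k => ?_
  field_simp

lemma summable_of_ratio {q σ α₁ α₂ α₃ β₁ β₂ β₃ : ℂ} (hq : ‖q‖ < 1) (hq0 : q ≠ 0) (hσ0 : σ ≠ 0)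
    {F : ℤ → ℂ} (hF : ∀ k, F k ≠ 0)
    (h1 : α₁ ≠ 0) (h2 : α₂ ≠ 0) (h3 : α₃ ≠ 0)
    (hrec : ∀ k, F (k + 1) = F k * (σ * ((1 - α₁ * q ^ k) * (1 - α₂ * q ^ k) * (1 - α₃ * q ^ k)) /
      ((1 - β₁ * q ^ k) * (1 - β₂ * q ^ k) * (1 - β₃ * q ^ k))))
    (hσ : ‖σ‖ < 1) (hσ' : ‖β₁ * β₂ * β₃ / (σ * (α₁ * α₂ * α₃))‖ < 1) : Summable F := by
  have hx : Tendsto (fun n : ℕ => q ^ n) atTop (𝓝 0) := tendsto_pow_atTop_nhds_zero_of_norm_lt_one hq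
  refine Summable.of_nat_of_neg ?_ ?_
  · refine summable_of_ratio_test_tendsto_lt_one hσ (Eventually.of_forall fun n => hF _) ?_
    have hl : Tendsto (fun x : ℂ => ‖σ * ((1 - α₁ * x) * (1 - α₂ * x) * (1 - α₃ * x)) /
      ((1 - β₁ * x) * (1 - β₂ * x) * (1 - β₃ * x))‖) (𝓝 0) (𝓝 ‖σ‖) := by
      have : ContinuousAt (fun x : ℂ => ‖σ * ((1 - α₁ * x) * (1 - α₂ * x) * (1 - α₃ * x)) /
        ((1 - β₁ * x) * (1 - β₂ * x) * (1 - β₃ * x))‖) 0 := by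
        refine ContinuousAt.norm (ContinuousAt.div (by fun_prop) (by fun_prop) (by simp))
      simpa [ContinuousAt] using this
    refine (hl.comp hx).congr fun n => ?_
    simp only [Function.comp]
    have := hrec n
    push_cast
    rw [this, norm_mul, mul_div_cancel_left₀ _ (norm_ne_zero_iff.2 (hF _)), zpow_natCast]
  · refine summable_of_ratio_test_tendsto_lt_one hσ' (Eventually.of_forall fun n => hF _) ?_
    have hl : Tendsto (fun x : ℂ => ‖((x - β₁) * (x - β₂) * (x - β₃)) /
      (σ * ((x - α₁) * (x - α₂) * (x - α₃)))‖) (𝓝 0)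
        (𝓝 ‖β₁ * β₂ * β₃ / (σ * (α₁ * α₂ * α₃))‖) := by
      have : ContinuousAt (fun x : ℂ => ‖((x - β₁) * (x - β₂) * (x - β₃)) /
        (σ * ((x - α₁) * (x - α₂) * (x - α₃)))‖) 0 := by
        refine ContinuousAt.norm (ContinuousAt.div (by fun_prop) (by fun_prop) ?_)
        simp [h1, h2, h3, hσ0]
      simpa [ContinuousAt] using this
    refine (hl.comp (hx.comp (tendsto_add_atTop_nat 1))).congr fun n => ?_
    simp only [Function.comp]
    have hr := hrec (-(n : ℤ) - 1)
    rw [sub_add_cancel] at hr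
    have e1 : -((n + 1 : ℕ) : ℤ) = -(n : ℤ) - 1 := by push_cast; ring
    have e2 : q ^ (-(n : ℤ) - 1) = (q ^ (n + 1))⁻¹ := by
      rw [← e1, zpow_neg, zpow_natCast]
    rw [e1]
    rw [e2] at hr
    have hne := hF (-(n : ℤ))
    have hne' := hF (-(n : ℤ) - 1)
    rw [hr] at hne ⊢
    rw [norm_mul, div_mul_cancel_left₀ (norm_ne_zero_iff.2 hne'), ← norm_inv]
    congr 1
    have hx0 : q ^ (n + 1) ≠ 0 := pow_ne_zero _ hq0
    generalize q ^ (n + 1) = x at *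
    have r : ∀ z : ℂ, 1 - z * x⁻¹ = (x - z) / x := fun z => by field_simp
    simp only [r]
    rw [inv_div]
    field_simp

lemma one_sub_ne {q z : ℂ} (hz : ∀ j : ℤ, z * q ^ j ≠ 1) (j : ℤ) : 1 - z * q ^ j ≠ 0 :=
  fun h => hz j (by linear_combination -h)

lemma one_sub_ne0 {q z : ℂ} (hz : ∀ j : ℤ, z * q ^ j ≠ 1) : 1 - z ≠ 0 := by
  have := one_sub_ne hz 0
  simpa using this

lemma shift_ne {q z : ℂ} (hq0 : q ≠ 0) (hz : ∀ j : ℤ, z * q ^ j ≠ 1) (n : ℤ) :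
    ∀ j : ℤ, (z * q ^ n) * q ^ j ≠ 1 := fun j => by
  rw [mul_assoc, ← zpow_add₀ hq0]; exact hz _

lemma shift_ne1 {q z : ℂ} (hq0 : q ≠ 0) (hz : ∀ j : ℤ, z * q ^ j ≠ 1) :
    ∀ j : ℤ, (z * q) * q ^ j ≠ 1 := fun j => by
  have := shift_ne hq0 hz 1 j
  simpa using this

lemma rat_up {q z : ℂ} (hq0 : q ≠ 0) (hz : ∀ j : ℤ, z * q ^ j ≠ 1) (l : ℤ) (r : ℕ) :
    qPoch z q (l + 1 + r) / qPoch (z * q) q l =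
      (1 - z) * ∏ i ∈ Finset.range r, (1 - z * q ^ (l + 1 + i)) := by
  have h1 := qPoch_mul_q hq0 hz l
  have h2 := qPoch_ne_zero (shift_ne1 hq0 hz) l
  rw [qPoch_add hz, ← h1]
  field_simp

lemma rat_down {q z : ℂ} (hq0 : q ≠ 0) (hz : ∀ j : ℤ, z * q ^ j ≠ 1) (l : ℤ) (r : ℕ) :
    qPoch z q l / qPoch (z * q) q (l + 1 + r) =
      (1 - z) / ∏ i ∈ Finset.range (r + 2), (1 - z * q ^ (l + i)) := by
  have h1 := qPoch_mul_q hq0 hz (l + 1 + r)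
  have h2 := qPoch_ne_zero (shift_ne1 hq0 hz) (l + 1 + r)
  have h3 : l + 1 + r + 1 = l + ((r + 2 : ℕ) : ℤ) := by push_cast; ring
  have h4 : ∏ i ∈ Finset.range (r + 2), (1 - z * q ^ (l + i)) ≠ 0 :=
    Finset.prod_ne_zero_iff.2 fun i _ => one_sub_ne hz _
  rw [h3, qPoch_add hz] at h1
  rw [div_eq_div_iff h2 h4, ← h1]

lemma rat_diag {q z : ℂ} (hq0 : q ≠ 0) (hz : ∀ j : ℤ, z * q ^ j ≠ 1) (l : ℤ) :
    qPoch z q l / qPoch (z * q) q l = (1 - z) / (1 - z * q ^ l) := by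
  have h1 := qPoch_mul_q hq0 hz l
  have h2 := qPoch_ne_zero (shift_ne1 hq0 hz) l
  rw [qPoch_succ hz] at h1
  rw [div_eq_div_iff h2 (one_sub_ne hz _), ← h1]

/-- The parameters of the theorem, with `a = g ^ 2`, and all the nonvanishing facts. -/
structure Good (q : ℝ) (g b c : ℂ) : Prop where
  q0 : 0 < q
  q1 : q < 1
  b0 : b ≠ 0
  c0 : c ≠ 0
  g0 : g ≠ 0
  cg : (starRingEnd ℂ) g = -g
  cb : (starRingEnd ℂ) b = c
  cc : (starRingEnd ℂ) c = b
  hg : ∀ j : ℤ, g * (q : ℂ) ^ j ≠ 1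
  ha : ∀ j : ℤ, g ^ 2 * (q : ℂ) ^ j ≠ 1
  hb : ∀ j : ℤ, b * (q : ℂ) ^ j ≠ 1
  hc : ∀ j : ℤ, c * (q : ℂ) ^ j ≠ 1
  hab : ∀ j : ℤ, g ^ 2 / b * (q : ℂ) ^ j ≠ 1
  hac : ∀ j : ℤ, g ^ 2 / c * (q : ℂ) ^ j ≠ 1

lemma Good.qc0 {q : ℝ} {g b c : ℂ} (h : Good q g b c) : (q : ℂ) ≠ 0 := by
  exact_mod_cast h.q0.ne'

lemma Good.qn {q : ℝ} {g b c : ℂ} (h : Good q g b c) : ‖(q : ℂ)‖ < 1 := by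
  rw [Complex.norm_real, Real.norm_of_nonneg h.q0.le]; exact h.q1

lemma mkGood (q : ℝ) (hq0 : 0 < q) (hq1 : q < 1)
    (g b c : ℂ) (hg : g ≠ 0) (hgre : g.re = 0) (hb : b ≠ 0) (hc : c = (starRingEnd ℂ) b)
    (hd1 : ∀ m : ℤ, qPoch (c * (q : ℂ)) (q : ℂ) m ≠ 0)
    (hd2 : ∀ m : ℤ, qPoch (g ^ 2 * (q : ℂ) / b) (q : ℂ) m ≠ 0) : Good q g b c := by
  have hqc : (q : ℂ) ≠ 0 := by exact_mod_cast hq0.ne'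
  have cg : (starRingEnd ℂ) g = -g := by
    apply Complex.ext <;> simp [hgre]
  have hcc : (starRingEnd ℂ) c = b := by rw [hc, Complex.conj_conj]
  have c1 : ∀ j : ℤ, c * (q : ℂ) ^ j ≠ 1 := fun j => by
    have := ne_one_of_qPoch hd1 (j - 1)
    rwa [mul_assoc, ← zpow_one_add₀ hqc, add_sub_cancel] at this
  have b1 : ∀ j : ℤ, g ^ 2 / b * (q : ℂ) ^ j ≠ 1 := fun j => by
    have := ne_one_of_qPoch hd2 (j - 1)
    rwa [mul_div_right_comm, mul_assoc, ← zpow_one_add₀ hqc, add_sub_cancel] at this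
  have hG : ∀ j : ℤ, g * (q : ℂ) ^ j ≠ 1 := fun j h => by
    have := congrArg Complex.re h
    rw [← Complex.ofReal_zpow, Complex.re_mul_ofReal, hgre] at this
    simp at this
  refine ⟨hq0, hq1, hb, ?_, hg, cg, hc.symm, hcc, hG, ?_, ?_, c1, b1, ?_⟩
  · rw [hc]; simpa using hb
  · intro j h
    have := congrArg Complex.re h
    rw [← Complex.ofReal_zpow, Complex.re_mul_ofReal, sq, Complex.mul_re, hgre] at this
    simp at this
    have h3 : 0 < q ^ j := zpow_pos hq0 j
    nlinarith [mul_self_nonneg g.im, mul_nonneg (mul_self_nonneg g.im) h3.le]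
  · intro j h
    apply c1 j
    have := congrArg (starRingEnd ℂ) h
    simpa [map_zpow₀, ← hc] using this
  · intro j h
    apply b1 j
    have := congrArg (starRingEnd ℂ) h
    simpa [map_zpow₀, hcc, cg] using this

lemma conj_Fnk {q : ℝ} {g b c : ℂ} (h : Good q g b c) (m k : ℤ) :
    (starRingEnd ℂ) (Fnk q g b c m k) = Fnk q (-g) c b m k := by
  unfold Fnk
  simp [map_zpow₀, conj_qPoch, h.cg, h.cb, h.cc]

lemma Fnk_ne {q : ℝ} {g b c : ℂ} (h : Good q g b c) (n k : ℤ) : Fnk q g b c n k ≠ 0 := by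
  unfold Fnk
  have e : g ^ 2 * (q : ℂ) / b = g ^ 2 / b * q := by ring
  have h1 := one_sub_ne h.hg k
  have h2 := one_sub_ne0 h.hg
  have h3 := qPoch_ne_zero h.hb (n + k)
  have h4 := qPoch_ne_zero h.hac (k - n)
  have h5 := qPoch_ne_zero (shift_ne1 h.qc0 h.hc) (n + k)
  have h6 := qPoch_ne_zero (shift_ne1 h.qc0 h.hab) (k - n)
  have h7 : (Real.sqrt q : ℂ) ≠ 0 := by
    exact_mod_cast (Real.sqrt_pos.2 h.q0).ne'
  rw [e]
  exact mul_ne_zero (mul_ne_zero (div_ne_zero h1 h2)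
    (div_ne_zero (mul_ne_zero h3 h4) (mul_ne_zero h5 h6))) (zpow_ne_zero _ h7)

lemma Fnk_summable {q : ℝ} {g b c : ℂ} (h : Good q g b c) (n : ℤ) :
    Summable (Fnk q g b c n) := by
  have hq0 := h.qc0
  have hs : (Real.sqrt q : ℂ) ≠ 0 := by
    exact_mod_cast (Real.sqrt_pos.2 h.q0).ne'
  have hs2 : (Real.sqrt q : ℂ) ^ 2 = q := by
    exact_mod_cast Real.sq_sqrt h.q0.le
  have hs1 : ‖(Real.sqrt q : ℂ)‖ < 1 := by
    rw [Complex.norm_real, Real.norm_of_nonneg (Real.sqrt_nonneg _)]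
    rw [Real.sqrt_lt' one_pos]; simpa using h.q1
  have hnb : ‖c‖ = ‖b‖ := by rw [← h.cb]; exact RCLike.norm_conj b
  refine summable_of_ratio (σ := (Real.sqrt q : ℂ)) (α₁ := g * q) (α₂ := b * (q : ℂ) ^ n)
    (α₃ := g ^ 2 / c * (q : ℂ) ^ (-n)) (β₁ := g) (β₂ := c * q * (q : ℂ) ^ n)
    (β₃ := g ^ 2 / b * q * (q : ℂ) ^ (-n)) h.qn hq0 hs (Fnk_ne h n)
    (mul_ne_zero h.g0 hq0) (mul_ne_zero h.b0 (zpow_ne_zero _ hq0))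
    (mul_ne_zero (div_ne_zero (pow_ne_zero _ h.g0) h.c0) (zpow_ne_zero _ hq0)) ?_ hs1 ?_
  · intro k
    unfold Fnk
    have e : g ^ 2 * (q : ℂ) / b = g ^ 2 / b * q := by ring
    have h1 := one_sub_ne h.hg k
    have h2 := one_sub_ne0 h.hg
    have h5 := qPoch_ne_zero (shift_ne1 h.qc0 h.hc) (n + k)
    have h6 := qPoch_ne_zero (shift_ne1 h.qc0 h.hab) (k - n)
    have h7 := one_sub_ne (shift_ne1 h.qc0 h.hc) (n + k)
    have h8 := one_sub_ne (shift_ne1 h.qc0 h.hab) (k - n)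
    rw [e, show n + (k + 1) = n + k + 1 by ring, show k + 1 - n = k - n + 1 by ring,
      qPoch_succ h.hb, qPoch_succ h.hac, qPoch_succ (shift_ne1 h.qc0 h.hc),
      qPoch_succ (shift_ne1 h.qc0 h.hab), zpow_add_one₀ hs, zpow_add_one₀ hq0]
    have x1 : ∀ z : ℂ, z * (q : ℂ) ^ n * (q : ℂ) ^ k = z * (q : ℂ) ^ (n + k) := fun z => by
      rw [zpow_add₀ hq0]; ring
    have x2 : ∀ z : ℂ, z * (q : ℂ) ^ (-n) * (q : ℂ) ^ k = z * (q : ℂ) ^ (k - n) := fun z => by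
      rw [sub_eq_add_neg, zpow_add₀ hq0]; ring
    rw [x1, x1, x2, x2]
    rw [show g * ((q : ℂ) ^ k * q) = g * q * (q : ℂ) ^ k by ring]
    generalize (1 - c * (q : ℂ) * (q : ℂ) ^ (n + k)) = d1 at *
    generalize (1 - g ^ 2 / b * (q : ℂ) * (q : ℂ) ^ (k - n)) = d2 at *
    generalize (1 - g * (q : ℂ) ^ k) = d3 at *
    field_simp
  · have : g * (c * q * (q : ℂ) ^ n) * (g ^ 2 / b * q * (q : ℂ) ^ (-n)) /
        ((Real.sqrt q : ℂ) * (g * q * (b * (q : ℂ) ^ n) * (g ^ 2 / c * (q : ℂ) ^ (-n)))) =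
        (Real.sqrt q : ℂ) * (c / b) ^ 2 := by
      have hqn := zpow_ne_zero n hq0
      have := h.g0; have := h.b0; have := h.c0
      rw [zpow_neg]
      field_simp
      rw [hs2]
    rw [this, norm_mul, norm_pow, norm_div, hnb, div_self (norm_ne_zero_iff.2 h.b0)]
    simpa using hs1

lemma prod_summable {u v : ℤ → ℂ} (hu : Summable u) (hv : Summable v) :
    Summable (fun k => u k * (starRingEnd ℂ) (v k)) := by
  have hb : ∀ k, ‖v k‖ ≤ ∑' k, ‖v k‖ := fun k =>
    hv.norm.le_tsum k (fun _ _ => norm_nonneg _)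
  refine Summable.of_norm_bounded (hu.norm.mul_right (∑' k, ‖v k‖)) fun k => ?_
  rw [norm_mul, RCLike.norm_conj]
  gcongr
  exact hb k

lemma prod_Fnk {q : ℝ} {g b c : ℂ} (h : Good q g b c) (n m k : ℤ) :
    Fnk q g b c n k * (starRingEnd ℂ) (Fnk q g b c m k) =
      (1 - g ^ 2)⁻¹ * ((q : ℂ) ^ k * (1 - g ^ 2 * (q : ℂ) ^ (2 * k))) *
        (qPoch b q (n + k) / qPoch (b * q) q (m + k)) *
        (qPoch (g ^ 2 / b) q (k - m) / qPoch (g ^ 2 / b * q) q (k - n)) *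
        (qPoch c q (m + k) / qPoch (c * q) q (n + k)) *
        (qPoch (g ^ 2 / c) q (k - n) / qPoch (g ^ 2 / c * q) q (k - m)) := by
  rw [conj_Fnk h]
  unfold Fnk
  have e : ∀ b : ℂ, g ^ 2 * (q : ℂ) / b = g ^ 2 / b * q := fun b => by ring
  have hs : (Real.sqrt q : ℂ) ^ k * (Real.sqrt q : ℂ) ^ k = (q : ℂ) ^ k := by
    rw [← mul_zpow]; congr 1
    exact_mod_cast Real.mul_self_sqrt h.q0.le
  have e2 : (q : ℂ) ^ (2 * k) = (q : ℂ) ^ k * (q : ℂ) ^ k := by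
    rw [two_mul, zpow_add₀ h.qc0]
  have e3 : (1 - g ^ 2)⁻¹ = (1 - g)⁻¹ * (1 - -g)⁻¹ := by
    rw [← mul_inv]; congr 1; ring
  rw [neg_sq, e, e, e2, e3]
  linear_combination ((1 - g * (q : ℂ) ^ k) / (1 - g) *
    (qPoch b (q : ℂ) (n + k) * qPoch (g ^ 2 / c) (q : ℂ) (k - n) /
      (qPoch (c * (q : ℂ)) (q : ℂ) (n + k) * qPoch (g ^ 2 / b * (q : ℂ)) (q : ℂ) (k - n))) *
      ((1 - -g * (q : ℂ) ^ k) / (1 - -g) *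
    (qPoch c (q : ℂ) (m + k) * qPoch (g ^ 2 / b) (q : ℂ) (k - m) /
      (qPoch (b * (q : ℂ)) (q : ℂ) (m + k) * qPoch (g ^ 2 / c * (q : ℂ)) (q : ℂ) (k - m))))) * hs

/-- the common constant -/
noncomputable def KK (g b c : ℂ) : ℂ :=
  (1 - b) * (1 - g ^ 2 / b) * (1 - c) * (1 - g ^ 2 / c) / (1 - g ^ 2)

lemma KK_ne {q : ℝ} {g b c : ℂ} (h : Good q g b c) : KK g b c ≠ 0 := by
  have h1 := one_sub_ne0 h.hb
  have h2 := one_sub_ne0 h.hab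
  have h3 := one_sub_ne0 h.hc
  have h4 := one_sub_ne0 h.hac
  have h5 := one_sub_ne0 h.ha
  exact div_ne_zero (mul_ne_zero (mul_ne_zero (mul_ne_zero h1 h2) h3) h4) h5

lemma off_zero {q : ℝ} {g b c : ℂ} (h : Good q g b c) (m : ℤ) (r : ℕ) :
    ∑' k, Fnk q g b c (m + 1 + r) k * (starRingEnd ℂ) (Fnk q g b c m k) = 0 := by
  have hK := KK_ne h
  have hS := prod_summable (Fnk_summable h (m + 1 + r)) (Fnk_summable h m)
  have key := offdiag_sum (t := fun k => (KK g b c)⁻¹ *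
      (Fnk q g b c (m + 1 + r) k * (starRingEnd ℂ) (Fnk q g b c m k)))
    h.qn h.qc0 (pow_ne_zero 2 h.g0) h.ha h.b0 h.c0 h.hc h.hac m r (hS.mul_left _) ?_
  · rw [tsum_mul_left] at key
    exact (mul_eq_zero.1 key).resolve_left (inv_ne_zero hK)
  · intro k
    rw [prod_Fnk h]
    have e1 : m + 1 + (r : ℤ) + k = (m + k) + 1 + r := by ring
    have e2 : k - m = (k - (m + 1 + r)) + 1 + r := by ring
    rw [e1, e2]
    rw [rat_up h.qc0 h.hb, rat_up h.qc0 h.hab, rat_down h.qc0 h.hc, rat_down h.qc0 h.hac]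
    rw [Finset.prod_mul_distrib, Finset.prod_mul_distrib]
    have r1 : ∏ i ∈ Finset.range r, (1 - g ^ 2 / b * (q : ℂ) ^ (k - (m + 1 + r) + 1 + i)) =
        ∏ i ∈ Finset.range r, (1 - g ^ 2 / b * (q : ℂ) ^ (k - (m + 1 + i))) := by
      rw [← Finset.prod_range_reflect]
      refine Finset.prod_congr rfl fun i hi => ?_
      have := Finset.mem_range.1 hi
      congr 3; omega
    have r2 : ∏ i ∈ Finset.range (r + 2), (1 - g ^ 2 / c * (q : ℂ) ^ (k - (m + 1 + r) + i)) =
        ∏ i ∈ Finset.range (r + 2), (1 - g ^ 2 / c * (q : ℂ) ^ (k - (m + i))) := by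
      rw [← Finset.prod_range_reflect]
      refine Finset.prod_congr rfl fun i hi => ?_
      have := Finset.mem_range.1 hi
      congr 3; omega
    have r3 : ∏ i ∈ Finset.range r, (1 - b * (q : ℂ) ^ (m + k + 1 + i)) =
        ∏ i ∈ Finset.range r, (1 - b * (q : ℂ) ^ (m + 1 + i + k)) := by
      refine Finset.prod_congr rfl fun i hi => ?_
      congr 3; ring
    have r4 : ∏ i ∈ Finset.range (r + 2), (1 - c * (q : ℂ) ^ (m + k + i)) =
        ∏ i ∈ Finset.range (r + 2), (1 - c * (q : ℂ) ^ (m + i + k)) := by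
      refine Finset.prod_congr rfl fun i hi => ?_
      congr 3; ring
    rw [r1, r2, r3, r4]
    have h1 := one_sub_ne0 h.hb
    have h2 := one_sub_ne0 h.hab
    have h3 := one_sub_ne0 h.hc
    have h4 := one_sub_ne0 h.hac
    have h5 := one_sub_ne0 h.ha
    have h6 : ∏ i ∈ Finset.range (r + 2), (1 - g ^ 2 / c * (q : ℂ) ^ (k - (m + i))) ≠ 0 :=
      Finset.prod_ne_zero_iff.2 fun i _ => one_sub_ne h.hac _
    have h7 : ∏ i ∈ Finset.range (r + 2), (1 - c * (q : ℂ) ^ (m + i + k)) ≠ 0 :=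
      Finset.prod_ne_zero_iff.2 fun i _ => one_sub_ne h.hc _
    rw [KK]
    generalize (∏ i ∈ Finset.range (r + 2), (1 - g ^ 2 / c * (q : ℂ) ^ (k - (m + i)))) = d1 at *
    generalize (∏ i ∈ Finset.range (r + 2), (1 - c * (q : ℂ) ^ (m + i + k))) = d2 at *
    generalize (∏ i ∈ Finset.range r, (1 - g ^ 2 / b * (q : ℂ) ^ (k - (m + 1 + i)))) = d3 at *
    generalize (∏ i ∈ Finset.range r, (1 - b * (q : ℂ) ^ (m + 1 + i + k))) = d4 at *
    generalize 1 - g ^ 2 / b = d5 at *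
    generalize 1 - g ^ 2 / c = d6 at *
    generalize 1 - g ^ 2 * (q : ℂ) ^ (2 * k) = d7 at *
    generalize 1 - g ^ 2 = d8 at *
    field_simp

lemma th'_inv (q B : ℂ) : th' q (1 / B) = th' q B := by
  rw [th', th', show 1 / B * q = q / B by ring, show q / (1 / B) = B * q by simp [mul_comm]]
  ring

lemma diag_core {q a y B : ℂ} (hq : ‖q‖ < 1) (hq0 : q ≠ 0) (ha0 : a ≠ 0)
    (ha : ∀ j : ℤ, a * q ^ j ≠ 1) (hy : y ≠ 0) (hB : B ≠ 0)
    (hy1 : ∀ j : ℤ, y * q ^ j ≠ 1) (hy2 : ∀ j : ℤ, a / y * q ^ j ≠ 1)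
    (hB1 : ∀ j : ℤ, B * q ^ j ≠ 1) (hB2 : ∀ j : ℤ, a / B * q ^ j ≠ 1) {t : ℤ → ℂ}
    (ht : Summable t)
    (htk : ∀ k, t k = q ^ k * (1 - a * q ^ (2 * k)) / (((1 - y * q ^ k) * (1 - a / y * q ^ k)) *
      ((1 - B * q ^ k) * (1 - a / B * q ^ k)))) :
    th q y * th q (a / y) * (th q B * th q (a / B)) * ∑' k, t k =
      (1 - a) * (qPochInf q q * qPochInf q q) * th' q a * th' q (y / B) * th' q (a / (y * B)) := by
  have key := diag_sum hq hq0 ha0 ha hy hB hy1 hy2 hB1 hB2 ht htk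
  rw [Lc, th'_inv] at key
  rw [th_eq hq, th_eq hq, th_eq hq, th_eq hq]
  have h1 := one_sub_ne0 hy1
  have h2 := one_sub_ne0 hy2
  have h3 := one_sub_ne0 hB1
  have h4 := one_sub_ne0 hB2
  have h5 := one_sub_ne0 ha
  have h6 := th'_ne_zero hq hq0 hB hB1
  have h7 := th'_ne_zero hq hq0 (div_ne_zero ha0 hB) hB2
  have h8 := th'_ne_zero hq hq0 ha0 ha
  have h9 := qPochInf_ne_zero hq (q_pow_ne hq hq0)
  have e : B * (1 - 1 / B) = -(1 - B) := by field_simp; ring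
  rw [e] at key
  generalize th' q (a / (y * B)) = x1 at *
  generalize th' q (a / B) = x2 at *
  generalize th' q (a / y) = x3 at *
  generalize th' q (y / B) = x4 at *
  generalize 1 - a / y = x5 at *
  generalize 1 - a / B = x6 at *
  generalize 1 - a = x7 at *
  generalize 1 - B = x8 at *
  generalize 1 - y = x9 at *
  generalize (∑' k, t k) = S at *
  field_simp at key
  linear_combination -key

lemma diag_val {q : ℝ} {g b c : ℂ} (h : Good q g b c)
    (hd4 : ∀ m : ℤ, 1 - b * c * (q : ℂ) ^ (2 * m) / g ^ 2 ≠ 0) (n : ℤ) :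
    ∑' k, Fnk q g b c n k * (starRingEnd ℂ) (Fnk q g b c n k) = hnorm q g b c n := by
  have hK := KK_ne h
  have hq0 := h.qc0
  have hqn := zpow_ne_zero n hq0
  have ha0 : g ^ 2 ≠ 0 := pow_ne_zero 2 h.g0
  have hb0 := h.b0
  have hc0 := h.c0
  have hS := prod_summable (Fnk_summable h n) (Fnk_summable h n)
  have ed : ∀ x : ℂ, g ^ 2 / (x * (q : ℂ) ^ n) = g ^ 2 / x * (q : ℂ) ^ (-n) := fun x => by
    rw [zpow_neg]; ring
  have h1 := one_sub_ne0 h.hb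
  have h2 := one_sub_ne0 h.hab
  have h3 := one_sub_ne0 h.hc
  have h4 := one_sub_ne0 h.hac
  have h5 := one_sub_ne0 h.ha
  have key := diag_core (t := fun k => (KK g b c)⁻¹ *
      (Fnk q g b c n k * (starRingEnd ℂ) (Fnk q g b c n k)))
    (y := c * (q : ℂ) ^ n) (B := b * (q : ℂ) ^ n)
    h.qn hq0 ha0 h.ha (mul_ne_zero h.c0 hqn) (mul_ne_zero h.b0 hqn)
    (shift_ne hq0 h.hc n) (by rw [ed]; exact shift_ne hq0 h.hac _)
    (shift_ne hq0 h.hb n) (by rw [ed]; exact shift_ne hq0 h.hab _) (hS.mul_left _) ?_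
  · rw [tsum_mul_left] at key
    generalize (∑' k, Fnk q g b c n k * (starRingEnd ℂ) (Fnk q g b c n k)) = S at *
    rw [th_pair_zpow h.qn hq0 ha0 hc0, th_pair_zpow h.qn hq0 ha0 hb0] at key
    set z := g ^ 2 / (b * c) with hz
    have hz0 : z ≠ 0 := div_ne_zero ha0 (mul_ne_zero hb0 hc0)
    have e1 : g ^ 2 / (c * (q : ℂ) ^ n * (b * (q : ℂ) ^ n)) = z / (q : ℂ) ^ (2 * n) := by
      rw [hz, two_mul, zpow_add₀ hq0]; field_simp
    have e2 : c * (q : ℂ) ^ n / (b * (q : ℂ) ^ n) = c / b := by field_simp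
    rw [e1, e2] at key
    have hev := th_even h.qn hq0 hz0 n
    rw [th_eq h.qn, th_eq h.qn] at hev
    have e3 : (g ^ 2 / c ^ 2) ^ n * (g ^ 2 / b ^ 2) ^ n = z ^ (2 * n) := by
      rw [← mul_zpow, zpow_mul, hz]; congr 1
      rw [zpow_ofNat]; field_simp
    have e4 : (q : ℂ) ^ (-(2 * n * n) - n) =
        (q : ℂ) ^ (-(n * n)) * (q : ℂ) ^ (-(n * n)) * ((q : ℂ) ^ n)⁻¹ := by
      rw [← zpow_neg, ← zpow_add₀ hq0, ← zpow_add₀ hq0]; congr 1; ring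
    have e5 : hnorm q g b c n = qPochInf q q * qPochInf q q * th' q (g ^ 2) * th' q z *
        th' q (c / b) / (th' q (g ^ 2 / b) * th' q (g ^ 2 / c) * th' q b * th' q c) *
        ((1 - 1 / z) / (1 - (q : ℂ) ^ (2 * n) / z)) * (q : ℂ) ^ n := by
      rw [hnorm, hz]
      simp only [th']
      have f1 : ∀ x y : ℂ, (q : ℂ) / (x / y) = y * q / x := fun x y => by
        rw [div_div_eq_mul_div, mul_comm]
      have f2 : ∀ x y : ℂ, x / y * q = x * q / y := fun x y => by ring
      have f3 : (1 : ℂ) / (g ^ 2 / (b * c)) = b * c / g ^ 2 := by rw [one_div_div]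
      have f4 : (q : ℂ) ^ (2 * n) / (g ^ 2 / (b * c)) = b * c * (q : ℂ) ^ (2 * n) / g ^ 2 := by
        rw [div_div_eq_mul_div, mul_comm]
      rw [f3, f4]
      simp only [f1, f2]
      ring
    rw [e5]
    have hz4 : 1 - (q : ℂ) ^ (2 * n) / z ≠ 0 := by
      have := hd4 n
      rwa [show b * c * (q : ℂ) ^ (2 * n) / g ^ 2 = (q : ℂ) ^ (2 * n) / z by
        rw [hz, div_div_eq_mul_div, mul_comm]] at this
    have t1 := th'_ne_zero h.qn hq0 (div_ne_zero ha0 hb0) h.hab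
    have t2 := th'_ne_zero h.qn hq0 (div_ne_zero ha0 hc0) h.hac
    have t3 := th'_ne_zero h.qn hq0 hb0 h.hb
    have t4 := th'_ne_zero h.qn hq0 hc0 h.hc
    have hq2 : (q : ℂ) ^ (2 * n) ≠ 0 := zpow_ne_zero _ hq0
    have hz2 : z ^ (2 * n) ≠ 0 := zpow_ne_zero _ hz0
    have hqq : (q : ℂ) ^ (-(n * n)) ≠ 0 := zpow_ne_zero _ hq0
    have e6 : (q : ℂ) ^ (2 * n) = (q : ℂ) ^ n * (q : ℂ) ^ n := by rw [two_mul, zpow_add₀ hq0]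
    have hz5 : 1 - z / (q : ℂ) ^ (2 * n) ≠ 0 := by
      intro hh; apply hz4
      field_simp at hh ⊢
      linear_combination -hh
    have e7 : (1 - 1 / z) / (1 - (q : ℂ) ^ (2 * n) / z) * (q : ℂ) ^ n =
        (1 - z) * ((q : ℂ) ^ n)⁻¹ / (1 - z / (q : ℂ) ^ (2 * n)) := by
      rw [← mul_div_right_comm, div_eq_div_iff hz4 hz5, e6]
      field_simp
      ring
    rw [mul_assoc (_ / _), e7]
    rw [e4] at hev
    simp only [th_eq h.qn] at key
    rw [KK] at key
    have hev' : th' q (z / (q : ℂ) ^ (2 * n)) = z ^ (2 * n) * ((q : ℂ) ^ (-(n * n)) *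
      (q : ℂ) ^ (-(n * n)) * ((q : ℂ) ^ n)⁻¹) * ((1 - z) * th' q z) /
        (1 - z / (q : ℂ) ^ (2 * n)) := by
      rw [eq_div_iff hz5, ← hev, mul_comm]
    rw [hev', ← e3] at key
    have hz2' : (g ^ 2 / c ^ 2) ^ n * (g ^ 2 / b ^ 2) ^ n ≠ 0 := by rwa [e3]
    have g1 := left_ne_zero_of_mul hz2'
    have g2 := right_ne_zero_of_mul hz2'
    clear_value z
    clear hev hev' e1 e2 e3 e4 e5 e6 e7 hz2 hz2' hS ed hd4 hK
    generalize (g ^ 2 / c ^ 2) ^ n = y1 at *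
    generalize (g ^ 2 / b ^ 2) ^ n = y2 at *
    generalize th' (q : ℂ) (g ^ 2 / b) = x1 at *
    generalize th' (q : ℂ) (g ^ 2 / c) = x2 at *
    generalize th' (q : ℂ) (c / b) = x3 at *
    generalize th' (q : ℂ) (g ^ 2) = x4 at *
    generalize 1 - z / (q : ℂ) ^ (2 * n) = x5 at *
    generalize 1 - g ^ 2 / b = x6 at *
    generalize 1 - g ^ 2 / c = x7 at *
    generalize 1 - g ^ 2 = x8 at *
    generalize 1 - b = x9 at *
    generalize 1 - c = x10 at *
    generalize 1 - z = x11 at *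
    generalize (q : ℂ) ^ (-(n * n)) = y3 at *
    generalize (q : ℂ) ^ n = y4 at *
    field_simp at key ⊢
    linear_combination key
  · intro k
    rw [prod_Fnk h, rat_diag hq0 h.hb, rat_diag hq0 h.hab, rat_diag hq0 h.hc,
      rat_diag hq0 h.hac]
    have x1 : ∀ z : ℂ, z * (q : ℂ) ^ n * (q : ℂ) ^ k = z * (q : ℂ) ^ (n + k) := fun z => by
      rw [zpow_add₀ hq0]; ring
    have x2 : ∀ z : ℂ, z * (q : ℂ) ^ (-n) * (q : ℂ) ^ k = z * (q : ℂ) ^ (k - n) := fun z => by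
      rw [sub_eq_add_neg, zpow_add₀ hq0]; ring
    rw [ed, ed, x1, x1, x2, x2, KK]
    have j1 := one_sub_ne h.hb (n + k)
    have j2 := one_sub_ne h.hc (n + k)
    have j3 := one_sub_ne h.hab (k - n)
    have j4 := one_sub_ne h.hac (k - n)
    generalize 1 - g ^ 2 / b * (q : ℂ) ^ (k - n) = d1 at *
    generalize 1 - g ^ 2 / c * (q : ℂ) ^ (k - n) = d2 at *
    generalize 1 - b * (q : ℂ) ^ (n + k) = d3 at *
    generalize 1 - c * (q : ℂ) ^ (n + k) = d4 at *
    generalize 1 - g ^ 2 / b = d5 at *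
    generalize 1 - g ^ 2 / c = d6 at *
    generalize 1 - g ^ 2 * (q : ℂ) ^ (2 * k) = d7 at *
    generalize 1 - g ^ 2 = d8 at *
    field_simp

/-- The functions `F_n`, `n ∈ ℤ`, form a family of orthogonal functions on the unit
circle with weight function `w(z) = 1` and squared norms `h_n(g,b,c|q)`. -/
theorem orthogonality_on_unit_circle (q : ℝ) (hq0 : 0 < q) (hq1 : q < 1)
    (g b c : ℂ) (hg : g ≠ 0) (hgre : g.re = 0) (hb : b ≠ 0) (hc : c = (starRingEnd ℂ) b)
    (h1g : 1 - g ≠ 0)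
    (hd1 : ∀ m : ℤ, qPoch (c * (q : ℂ)) (q : ℂ) m ≠ 0)
    (hd2 : ∀ m : ℤ, qPoch (g ^ 2 * (q : ℂ) / b) (q : ℂ) m ≠ 0)
    (hd3 : qPochInf (g ^ 2 * (q : ℂ) / b) (q : ℂ) ≠ 0 ∧
      qPochInf (b * (q : ℂ) / g ^ 2) (q : ℂ) ≠ 0 ∧
      qPochInf (g ^ 2 * (q : ℂ) / c) (q : ℂ) ≠ 0 ∧
      qPochInf (c * (q : ℂ) / g ^ 2) (q : ℂ) ≠ 0 ∧
      qPochInf (b * (q : ℂ)) (q : ℂ) ≠ 0 ∧ qPochInf ((q : ℂ) / b) (q : ℂ) ≠ 0 ∧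
      qPochInf (c * (q : ℂ)) (q : ℂ) ≠ 0 ∧ qPochInf ((q : ℂ) / c) (q : ℂ) ≠ 0)
    (hd4 : ∀ m : ℤ, 1 - b * c * (q : ℂ) ^ (2 * m) / g ^ 2 ≠ 0) :
    ∀ n m : ℤ,
      (1 / (2 * (Real.pi : ℂ))) *
          ∫ θ in (0 : ℝ)..(2 * Real.pi),
            Fq q g b c n (Complex.exp ((θ : ℂ) * Complex.I)) *
              (starRingEnd ℂ) (Fq q g b c m (Complex.exp ((θ : ℂ) * Complex.I))) =
        hnorm q g b c n * (if n = m then 1 else 0) := by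
  intro n m
  have h := mkGood q hq0 hq1 g b c hg hgre hb hc hd1 hd2
  unfold Fq
  rw [parseval (Fnk_summable h n) (Fnk_summable h m)]
  rcases lt_trichotomy n m with hlt | heq | hgt
  · rw [if_neg hlt.ne, mul_zero]
    obtain ⟨r, hr⟩ := Int.le.dest (show n + 1 ≤ m by omega)
    have h0 := off_zero h n r
    rw [hr] at h0
    have h1 := congrArg (starRingEnd ℂ) h0
    rw [Complex.conj_tsum, map_zero] at h1
    rw [← h1]
    refine tsum_congr fun k => ?_
    rw [map_mul, Complex.conj_conj, mul_comm]
  · subst heq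
    rw [if_pos rfl, mul_one]
    exact diag_val h hd4 n
  · rw [if_neg hgt.ne', mul_zero]
    obtain ⟨r, hr⟩ := Int.le.dest (show m + 1 ≤ n by omega)
    have h0 := off_zero h m r
    rwa [hr] at h0
end

section
/- Let a,c ∈ ℂ∖ℤ with a−c not a nonzero integer. Define, for n,k,l ∈ ℤ, f_{nk} := Γ(1+a−c)/(Γ(1+a+n+k)·Γ(1−c−n−k)) and g_{kl} := Γ(1+c−a)/(Γ(1+c+l+k)·Γ(1−a−l−k)). Then the infinite matrices F=(f_{nk})_{n,k∈ℤ} and G=(g_{kl})_{k,l∈ℤ} are inverses of each other: for all n,l ∈ ℤ, Σ_{k∈ℤ} f_{nk} g_{kl} = δ_{n,l} and Σ_{k∈ℤ} g_{nk} f_{kl} = δ_{n,l}, both bilateral sums converging absolutely. -/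
open Complex

/-- `f_{nk} = Γ(1+a−c)/(Γ(1+a+n+k)·Γ(1−c−n−k))`. -/
noncomputable def fMat (a c : ℂ) (n k : ℤ) : ℂ :=
  Complex.Gamma (1 + a - c) /
    (Complex.Gamma (1 + a + (n : ℂ) + (k : ℂ)) * Complex.Gamma (1 - c - (n : ℂ) - (k : ℂ)))

/-- `g_{kl} = Γ(1+c−a)/(Γ(1+c+l+k)·Γ(1−a−l−k))`. -/
noncomputable def gMat (a c : ℂ) (k l : ℤ) : ℂ :=
  Complex.Gamma (1 + c - a) /
    (Complex.Gamma (1 + c + (l : ℂ) + (k : ℂ)) * Complex.Gamma (1 - a - (l : ℂ) - (k : ℂ)))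

open Filter Topology Asymptotics

lemma bmi_add_ne {a : ℂ} (ha : ∀ m : ℤ, a ≠ (m : ℂ)) (k : ℤ) : a + k ≠ 0 := by
  intro h
  apply ha (-k)
  push_cast
  linear_combination h

lemma bmi_shift {a : ℂ} (ha : ∀ m : ℤ, a ≠ (m : ℂ)) (n : ℤ) : ∀ m : ℤ, a + n ≠ (m : ℂ) := by
  intro m h
  apply ha (m - n)
  push_cast
  linear_combination h

lemma bmi_mem {a : ℂ} (ha : ∀ m : ℤ, a ≠ (m : ℂ)) : a ∈ Complex.integerComplement := by
  rintro ⟨m, hm⟩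
  exact ha m hm.symm

lemma bmi_inv_isBigO (a : ℂ) : (fun k : ℤ => (a + k)⁻¹) =O[cofinite] fun k : ℤ => ((k : ℝ))⁻¹ := by
  simpa using EisensteinSeries.linear_inv_isBigO_right 1 a

lemma bmi_summable (a b : ℂ) : Summable fun k : ℤ => ((a + k) * (b + k))⁻¹ := by
  apply EisensteinSeries.summable_inv_of_isBigO_rpow_inv (a := 2) (by norm_num)
  simpa [pow_two] using (bmi_inv_isBigO b).mul (bmi_inv_isBigO a)

lemma bmi_inv_tendsto (a : ℂ) : Tendsto (fun k : ℤ => (a + k)⁻¹) cofinite (𝓝 0) := by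
  apply (bmi_inv_isBigO a).trans_tendsto
  have h : Tendsto (fun k : ℤ => (k : ℝ)) cofinite (cocompact ℝ) :=
    Int.tendsto_coe_cofinite
  exact (tendsto_inv₀_cobounded (α := ℝ)).comp (by simpa [Metric.cobounded_eq_cocompact] using h)

lemma bmi_bdd {f : ℤ → ℂ} {L : ℂ} (h : Tendsto f cofinite (𝓝 L)) : ∃ M : ℝ, 0 < M ∧ ∀ k, ‖f k‖ ≤ M := by
  have h1 : ∀ᶠ k in cofinite, ‖f k‖ < ‖L‖ + 1 :=
    h.norm.eventually (gt_mem_nhds (by linarith))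
  have h2 : {k | ¬ ‖f k‖ < ‖L‖ + 1}.Finite := h1
  obtain ⟨M, hM⟩ := (h2.image (fun k => ‖f k‖)).bddAbove
  refine ⟨max M (‖L‖ + 1), lt_max_of_lt_right (by positivity), fun k => ?_⟩
  by_cases hk : ‖f k‖ < ‖L‖ + 1
  · exact le_max_of_le_right hk.le
  · exact le_max_of_le_left (hM ⟨k, hk, rfl⟩)

lemma bmi_sin_ne {a : ℂ} (ha : ∀ m : ℤ, a ≠ (m : ℂ)) : Complex.sin (Real.pi * a) ≠ 0 :=
  sin_pi_mul_ne_zero (bmi_mem ha)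

lemma bmi_cot_sum {a b : ℂ} (ha : ∀ m : ℤ, a ≠ (m : ℂ)) (hb : ∀ m : ℤ, b ≠ (m : ℂ)) (hab : a ≠ b) :
    ∑' k : ℤ, ((a + k) * (b + k))⁻¹ =
      Real.pi * Complex.sin (Real.pi * (b - a)) /
        ((b - a) * Complex.sin (Real.pi * a) * Complex.sin (Real.pi * b)) := by
  have hba : b - a ≠ 0 := sub_ne_zero.mpr hab.symm
  have hs := bmi_summable a b
  have key : ∀ k : ℤ, ((a + k) * (b + k))⁻¹ = (1 / (a + k) - 1 / (b + k)) / (b - a) := by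
    intro k
    have h1 := bmi_add_ne ha k
    have h2 := bmi_add_ne hb k
    field_simp
    ring
  have s1 : Summable fun n : ℕ => ((a + ((n + 1 : ℤ) : ℂ)) * (b + ((n + 1 : ℤ) : ℂ)))⁻¹ :=
    hs.comp_injective (i := fun n : ℕ => (n + 1 : ℤ)) (fun x y h => by simpa using h)
  have s2 : Summable fun n : ℕ => ((a + ((-(n + 1) : ℤ) : ℂ)) * (b + ((-(n + 1) : ℤ) : ℂ)))⁻¹ :=
    hs.comp_injective (i := fun n : ℕ => (-(n + 1) : ℤ)) (fun x y h => by simpa using h)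
  have e := tsum_of_add_one_of_neg_add_one (f := fun k : ℤ => ((a + k) * (b + k))⁻¹) s1 s2
  rw [e, add_right_comm, ← s1.tsum_add s2]
  have ca := cot_series_rep' (bmi_mem ha)
  have cb := cot_series_rep' (bmi_mem hb)
  have e2 : ∑' n : ℕ, (((a + ((n + 1 : ℤ) : ℂ)) * (b + ((n + 1 : ℤ) : ℂ)))⁻¹ +
      ((a + ((-(n + 1) : ℤ) : ℂ)) * (b + ((-(n + 1) : ℤ) : ℂ)))⁻¹) =
      ((Real.pi * Complex.cot (Real.pi * a) - 1 / a) -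
        (Real.pi * Complex.cot (Real.pi * b) - 1 / b)) / (b - a) := by
    rw [ca, cb, ← (summable_cotTerm (bmi_mem ha)).tsum_sub (summable_cotTerm (bmi_mem hb)),
      ← tsum_div_const]
    refine tsum_congr fun n => ?_
    rw [key, key]
    simp only [cotTerm]
    push_cast
    ring
  rw [e2]
  have a0 : a ≠ 0 := by simpa using ha 0
  have b0 : b ≠ 0 := by simpa using hb 0
  have sa := bmi_sin_ne ha
  have sb := bmi_sin_ne hb
  rw [mul_sub, Complex.sin_sub, Complex.cot, Complex.cot]
  simp only [Int.cast_zero, add_zero]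
  field_simp
  ring

lemma bmi_sq_sum {a : ℂ} (ha : ∀ m : ℤ, a ≠ (m : ℂ)) :
    ∑' k : ℤ, ((a + k) * (a + k))⁻¹ =
      Real.pi ^ 2 / (Complex.sin (Real.pi * a) * Complex.sin (Real.pi * a)) := by
  obtain ⟨M, hM0, hM⟩ := bmi_bdd (bmi_inv_tendsto a)
  have hlow : ∀ k : ℤ, 1 / M ≤ ‖a + k‖ := by
    intro k
    have := hM k
    rw [norm_inv] at this
    have h2 : 0 < ‖a + k‖ := norm_pos_iff.mpr (bmi_add_ne ha k)
    rw [div_le_iff₀ hM0]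
    rw [inv_le_iff_one_le_mul₀ h2] at this
    linarith
  have hball : ∀ᶠ b in 𝓝[≠] a, ‖b - a‖ < 1 / (2 * M) := by
    apply eventually_nhdsWithin_of_eventually_nhds
    have := Metric.ball_mem_nhds a (show 0 < 1 / (2 * M) by positivity)
    filter_upwards [this] with b hb
    simpa [dist_eq_norm] using hb
  have hlow2 : ∀ b : ℂ, ‖b - a‖ < 1 / (2 * M) → ∀ k : ℤ, ‖a + k‖ / 2 ≤ ‖b + k‖ := by
    intro b hb k
    have h1 : ‖a + k‖ ≤ ‖b + k‖ + ‖b - a‖ := by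
      have e : a + k = (b + k) - (b - a) := by ring
      rw [e]
      exact norm_sub_le _ _
    have h2 := hlow k
    have h3 : 1 / (2 * M) = 1 / M / 2 := by field_simp
    linarith
  have hnorm : ∀ k : ℤ, 0 < ‖a + k‖ := fun k => norm_pos_iff.mpr (bmi_add_ne ha k)
  have L1 : Tendsto (fun b : ℂ => ∑' k : ℤ, ((a + k) * (b + k))⁻¹) (𝓝[≠] a)
      (𝓝 (∑' k : ℤ, ((a + k) * (a + k))⁻¹)) := by
    refine tendsto_tsum_of_dominated_convergence
      (bound := fun k : ℤ => 2 * ‖((a + k) * (a + k))⁻¹‖)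
      ((bmi_summable a a).norm.mul_left 2) ?_ ?_
    · intro k
      have hk := bmi_add_ne ha k
      have : ContinuousAt (fun b : ℂ => ((a + k) * (b + k))⁻¹) a := by
        apply ContinuousAt.inv₀ (by fun_prop)
        exact mul_ne_zero hk hk
      exact this.tendsto.mono_left nhdsWithin_le_nhds
    · filter_upwards [hball] with b hb k
      have h1 := hlow2 b hb k
      have h2 := hnorm k
      rw [norm_inv, norm_inv, norm_mul, norm_mul]
      have : 0 < ‖b + k‖ := by linarith
      rw [← div_eq_mul_inv, inv_eq_one_div, div_le_div_iff₀ (by positivity) (by positivity)]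
      nlinarith
  have L2 : Tendsto (fun b : ℂ => ∑' k : ℤ, ((a + k) * (b + k))⁻¹) (𝓝[≠] a)
      (𝓝 (Real.pi ^ 2 / (Complex.sin (Real.pi * a) * Complex.sin (Real.pi * a)))) := by
    have sa := bmi_sin_ne ha
    have hd : HasDerivAt (fun b : ℂ => Complex.sin (Real.pi * (b - a))) (Real.pi : ℂ) a := by
      have h1 : HasDerivAt (fun b : ℂ => (Real.pi : ℂ) * (b - a)) (Real.pi : ℂ) a := by
        simpa using ((hasDerivAt_id a).sub_const a).const_mul (Real.pi : ℂ)
      simpa using h1.csin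
    have hsl := hasDerivAt_iff_tendsto_slope.mp hd
    have hc : Tendsto (fun b : ℂ => Real.pi / (Complex.sin (Real.pi * a) * Complex.sin (Real.pi * b)))
        (𝓝[≠] a) (𝓝 (Real.pi / (Complex.sin (Real.pi * a) * Complex.sin (Real.pi * a)))) := by
      have : ContinuousAt (fun b : ℂ => (Real.pi : ℂ) /
          (Complex.sin (Real.pi * a) * Complex.sin (Real.pi * b))) a := by
        apply ContinuousAt.div (by fun_prop) (by fun_prop)
        exact mul_ne_zero sa sa
      exact this.tendsto.mono_left nhdsWithin_le_nhds
    have := hsl.mul hc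
    rw [← mul_div_assoc, ← pow_two] at this
    refine this.congr' ?_
    filter_upwards [hball, self_mem_nhdsWithin] with b hb hne
    have hb' : ∀ m : ℤ, b ≠ m := by
      intro m hm
      have h1 := hlow2 b hb (-m)
      have h2 := hnorm (-m)
      have : b + ((-m : ℤ) : ℂ) = 0 := by rw [hm]; push_cast; ring
      rw [this, norm_zero] at h1
      linarith
    have hne' : b ≠ a := hne
    rw [bmi_cot_sum ha hb' (Ne.symm hne')]
    have sb := bmi_sin_ne hb'
    have : b - a ≠ 0 := sub_ne_zero.mpr hne'
    simp only [slope_def_field, sub_self, mul_zero, Complex.sin_zero, sub_zero]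
    field_simp
  exact tendsto_nhds_unique L1 L2

lemma bmi_telescope {t T : ℤ → ℂ} {C L : ℂ} (hs : Summable t) (hC : C ≠ 0)
    (hT : Tendsto T cofinite (𝓝 L)) (h : ∀ k, C * t k = T (k + 1) - T k) : ∑' k, t k = 0 := by
  have h1 : Tendsto (fun N : ℕ => ∑ k ∈ Finset.Ico (-(N : ℤ)) N, C * t k) atTop
      (𝓝 (∑' k, C * t k)) := (hs.mul_left C).hasSum.comp (Finset.tendsto_Ico_neg (R := ℤ))
  have hp : Tendsto (fun N : ℕ => (N : ℤ)) atTop cofinite := by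
    rw [← Nat.cofinite_eq_atTop]
    exact Nat.cast_injective.tendsto_cofinite
  have hn : Tendsto (fun N : ℕ => -(N : ℤ)) atTop cofinite := by
    rw [← Nat.cofinite_eq_atTop]
    exact (neg_injective.comp Nat.cast_injective).tendsto_cofinite
  have h2 : Tendsto (fun N : ℕ => T N - T (-(N : ℤ))) atTop (𝓝 (L - L)) :=
    (hT.comp hp).sub (hT.comp hn)
  have h3 : ∀ N : ℕ, ∑ k ∈ Finset.Ico (-(N : ℤ)) N, C * t k = T N - T (-(N : ℤ)) := by
    intro N
    have := Finset.sum_Ico_int_sub N T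
    simp_rw [h]
    rw [← neg_sub, ← this, ← Finset.sum_neg_distrib]
    exact Finset.sum_congr rfl fun k _ => by ring
  simp_rw [h3] at h1
  have h4 := tendsto_nhds_unique h1 h2
  rw [tsum_mul_left, sub_self] at h4
  exact (mul_eq_zero.mp h4).resolve_left hC

lemma bmi_Gamma_ne {z : ℂ} (hz : ∀ m : ℤ, z ≠ (m : ℂ)) : Complex.Gamma z ≠ 0 :=
  Complex.Gamma_ne_zero fun m => by simpa using hz (-m)

lemma bmi_one_sub {z : ℂ} (hz : ∀ m : ℤ, z ≠ (m : ℂ)) : ∀ m : ℤ, 1 - z ≠ (m : ℂ) := by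
  intro m h
  apply hz (1 - m)
  push_cast
  linear_combination -h

/-- `Γ(1-a-n-k)/Γ(1-c-n-k)`. -/
noncomputable def bmiQ (a c : ℂ) (n k : ℤ) : ℂ :=
  Complex.Gamma (1 - (a + n + k)) / Complex.Gamma (1 - (c + n + k))

lemma bmiQ_ne {a c : ℂ} (ha : ∀ m : ℤ, a ≠ (m : ℂ)) (hc : ∀ m : ℤ, c ≠ (m : ℂ)) (n k : ℤ) :
    bmiQ a c n k ≠ 0 :=
  div_ne_zero (bmi_Gamma_ne (bmi_one_sub (bmi_shift (bmi_shift ha n) k)))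
    (bmi_Gamma_ne (bmi_one_sub (bmi_shift (bmi_shift hc n) k)))

lemma bmi_Gamma_step {z : ℂ} (hz : ∀ m : ℤ, z ≠ (m : ℂ)) :
    Complex.Gamma (1 - z) = -z * Complex.Gamma (1 - (z + 1)) := by
  have := Complex.Gamma_add_one (-z) (by simpa using hz 0)
  rw [show 1 - z = -z + 1 by ring, this]
  congr 2
  ring

lemma bmiQ_step {a c : ℂ} (ha : ∀ m : ℤ, a ≠ (m : ℂ)) (hc : ∀ m : ℤ, c ≠ (m : ℂ)) (n k : ℤ) :
    bmiQ a c n k / bmiQ a c (n + 1) k = 1 + (a - c) * (c + n + k)⁻¹ := by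
  have h1 := bmi_Gamma_ne (bmi_one_sub (bmi_shift (bmi_shift ha (n + 1)) k))
  have h2 := bmi_Gamma_ne (bmi_one_sub (bmi_shift (bmi_shift hc (n + 1)) k))
  have ea := bmi_Gamma_step (bmi_shift (bmi_shift ha n) k)
  have ec := bmi_Gamma_step (bmi_shift (bmi_shift hc n) k)
  have hne := bmi_add_ne (bmi_shift hc n) k
  unfold bmiQ
  rw [ea, ec]
  have ra : a + n + k + 1 = a + (n + 1 : ℤ) + k := by push_cast; ring
  have rc : c + n + k + 1 = c + (n + 1 : ℤ) + k := by push_cast; ring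
  rw [ra, rc]
  field_simp
  ring

lemma bmiQ_tendsto_nat {a c : ℂ} (ha : ∀ m : ℤ, a ≠ (m : ℂ)) (hc : ∀ m : ℤ, c ≠ (m : ℂ))
    (n : ℤ) (d : ℕ) :
    Tendsto (fun k => bmiQ a c n k / bmiQ a c (n + d) k) cofinite (𝓝 1) := by
  induction d with
  | zero =>
    simp [div_self (bmiQ_ne ha hc n _)]
  | succ d ih =>
    have h : Tendsto (fun k => bmiQ a c (n + d) k / bmiQ a c (n + d + 1) k) cofinite (𝓝 1) := by
      simp_rw [bmiQ_step ha hc]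
      simpa using ((bmi_inv_tendsto (c + (n + d : ℤ))).const_mul (a - c)).const_add 1
    have h2 := ih.mul h
    rw [one_mul] at h2
    refine h2.congr fun k => ?_
    rw [div_mul_div_cancel₀ (bmiQ_ne ha hc _ _)]
    push_cast
    rw [add_assoc]

lemma bmiQ_tendsto {a c : ℂ} (ha : ∀ m : ℤ, a ≠ (m : ℂ)) (hc : ∀ m : ℤ, c ≠ (m : ℂ)) (n l : ℤ) :
    Tendsto (fun k => bmiQ a c n k / bmiQ a c l k) cofinite (𝓝 1) := by
  rcases le_total n l with h | h
  · obtain ⟨d, rfl⟩ := Int.le.dest h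
    exact bmiQ_tendsto_nat ha hc n d
  · obtain ⟨d, rfl⟩ := Int.le.dest h
    simpa using (bmiQ_tendsto_nat ha hc l d).inv₀ one_ne_zero

/-- The summand without the constant factors. -/
noncomputable def bmiT (a c : ℂ) (n l k : ℤ) : ℂ :=
  1 / (Complex.Gamma (1 + (a + n + k)) * Complex.Gamma (1 - (c + n + k)) *
    (Complex.Gamma (1 + (c + l + k)) * Complex.Gamma (1 - (a + l + k))))

/-- The limiting constant. -/
noncomputable def bmiS (a c : ℂ) (n l : ℤ) : ℂ :=
  (-1) ^ n * (-1) ^ l * Complex.sin (Real.pi * a) * Complex.sin (Real.pi * c) / Real.pi ^ 2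

lemma bmi_sin_shift (a : ℂ) (n : ℤ) :
    Complex.sin (Real.pi * (a + n)) = (-1) ^ n * Complex.sin (Real.pi * a) := by
  have := Complex.sin_antiperiodic.add_int_mul_eq n (x := Real.pi * a)
  rw [← n.cast_negOnePow ℂ, ← this]
  congr 1
  ring

lemma bmi_fg (a c : ℂ) (n l k : ℤ) : fMat a c n k * gMat a c k l =
    Complex.Gamma (1 + a - c) * Complex.Gamma (1 + c - a) * bmiT a c n l k := by
  unfold fMat gMat bmiT
  rw [div_mul_div_comm, div_eq_mul_one_div]
  simp only [add_assoc, sub_add_eq_sub_sub]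

lemma bmi_Gamma_refl {z : ℂ} (hz : ∀ m : ℤ, z ≠ (m : ℂ)) :
    1 / Complex.Gamma (1 + z) = Complex.sin (Real.pi * z) / Real.pi * Complex.Gamma (1 - z) / z := by
  have h0 : z ≠ 0 := by simpa using hz 0
  have h1 := Complex.Gamma_mul_Gamma_one_sub z
  have h2 := bmi_Gamma_ne hz
  have h3 := bmi_sin_ne hz
  have hpi : (Real.pi : ℂ) ≠ 0 := by exact_mod_cast Real.pi_ne_zero
  rw [add_comm, Complex.Gamma_add_one z h0]
  rw [eq_div_iff h3] at h1
  generalize Complex.sin (Real.pi * z) = w at *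
  field_simp
  linear_combination -h1

lemma bmiT_eq {a c : ℂ} (ha : ∀ m : ℤ, a ≠ (m : ℂ)) (hc : ∀ m : ℤ, c ≠ (m : ℂ)) (n l k : ℤ) :
    bmiT a c n l k = bmiS a c n l * (bmiQ a c n k / bmiQ a c l k) *
      ((a + n + k) * (c + l + k))⁻¹ := by
  have hx := bmi_shift (bmi_shift ha n) k
  have hy := bmi_shift (bmi_shift hc l) k
  have e1 := bmi_Gamma_refl hx
  have e2 := bmi_Gamma_refl hy
  have hk : ((-1 : ℂ) ^ k) * (-1) ^ k = 1 := by
    rw [← mul_zpow]; simp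
  have : bmiT a c n l k = (1 / Complex.Gamma (1 + (a + n + k))) * (1 / Complex.Gamma (1 + (c + l + k)))
      / (Complex.Gamma (1 - (c + n + k)) * Complex.Gamma (1 - (a + l + k))) := by
    unfold bmiT
    field_simp
  rw [this, e1, e2, bmi_sin_shift, bmi_sin_shift, bmi_sin_shift, bmi_sin_shift]
  unfold bmiQ bmiS
  have g1 := bmi_Gamma_ne (bmi_one_sub (bmi_shift (bmi_shift ha l) k))
  have g2 := bmi_Gamma_ne (bmi_one_sub (bmi_shift (bmi_shift hc n) k))
  have g3 := bmi_Gamma_ne (bmi_one_sub hx)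
  have g4 := bmi_Gamma_ne (bmi_one_sub hy)
  have x0 := bmi_add_ne (bmi_shift ha n) k
  have y0 := bmi_add_ne (bmi_shift hc l) k
  have hpi : (Real.pi : ℂ) ≠ 0 := by exact_mod_cast Real.pi_ne_zero
  generalize (-1 : ℂ) ^ k = ε at *
  generalize (-1 : ℂ) ^ n = ε₁ at *
  generalize (-1 : ℂ) ^ l = ε₂ at *
  field_simp
  linear_combination ε₁ * ε₂ * Complex.sin (Real.pi * a) * Complex.sin (Real.pi * c) * hk

lemma bmiT_summable {a c : ℂ} (ha : ∀ m : ℤ, a ≠ (m : ℂ)) (hc : ∀ m : ℤ, c ≠ (m : ℂ)) (n l : ℤ) :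
    Summable (fun k => bmiT a c n l k) := by
  obtain ⟨M, hM0, hM⟩ := bmi_bdd ((bmiQ_tendsto ha hc n l).const_mul (bmiS a c n l))
  refine Summable.of_norm_bounded ((bmi_summable (a + n) (c + l)).norm.mul_left M) fun k => ?_
  rw [bmiT_eq ha hc, norm_mul]
  exact mul_le_mul_of_nonneg_right (hM k) (norm_nonneg _)

lemma bmiT_tele {a c : ℂ} (ha : ∀ m : ℤ, a ≠ (m : ℂ)) (hc : ∀ m : ℤ, c ≠ (m : ℂ)) (n l k : ℤ) :
    (a + n + (k + 1 : ℤ)) * (c + l + (k + 1 : ℤ)) * bmiT a c n l (k + 1) =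
      (c + n + k) * (a + l + k) * bmiT a c n l k := by
  have hx := bmi_shift (bmi_shift ha n) (k + 1)
  have hy := bmi_shift (bmi_shift hc l) (k + 1)
  have x0 := bmi_add_ne (bmi_shift ha n) (k + 1)
  have y0 := bmi_add_ne (bmi_shift hc l) (k + 1)
  have p0 := bmi_add_ne (bmi_shift ha l) k
  have q0 := bmi_add_ne (bmi_shift hc n) k
  have e1 := Complex.Gamma_add_one _ x0
  have e2 := Complex.Gamma_add_one _ y0
  have e3 := bmi_Gamma_step (bmi_shift (bmi_shift ha l) k)
  have e4 := bmi_Gamma_step (bmi_shift (bmi_shift hc n) k)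
  have r : ∀ (z : ℂ) (m : ℤ), z + m + k + 1 = z + m + (k + 1 : ℤ) := by
    intro z m; push_cast; ring
  have r' : ∀ (z : ℂ) (m : ℤ), 1 + (z + m + k) = z + m + (k + 1 : ℤ) := by
    intro z m; push_cast; ring
  rw [r] at e3 e4
  unfold bmiT
  rw [r', r', add_comm 1, add_comm 1, e1, e2, e3, e4]
  have g1 := bmi_Gamma_ne (bmi_one_sub (bmi_shift (bmi_shift ha l) (k + 1)))
  have g2 := bmi_Gamma_ne (bmi_one_sub (bmi_shift (bmi_shift hc n) (k + 1)))
  have g3 := bmi_Gamma_ne hx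
  have g4 := bmi_Gamma_ne hy
  field_simp

lemma bmi_tsum_ne {a c : ℂ} (ha : ∀ m : ℤ, a ≠ (m : ℂ)) (hc : ∀ m : ℤ, c ≠ (m : ℂ)) {n l : ℤ}
    (hnl : n ≠ l) : ∑' k, bmiT a c n l k = 0 := by
  have hnl' : (n : ℂ) - l ≠ 0 := by
    rw [sub_ne_zero]; exact_mod_cast hnl
  by_cases hac : a = c
  · subst hac
    have h : ∀ k, bmiT a a n l k = bmiS a a n l * ((a + n + k) * (a + l + k))⁻¹ := by
      intro k
      have : ∀ m, bmiQ a a m k = 1 := fun m =>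
        div_self (bmi_Gamma_ne (bmi_one_sub (bmi_shift (bmi_shift ha m) k)))
      rw [bmiT_eq ha hc, this, this]
      ring
    simp_rw [h]
    rw [tsum_mul_left, bmi_cot_sum (bmi_shift ha n) (bmi_shift ha l)
      (by intro h; apply hnl'; linear_combination h)]
    have : Complex.sin (Real.pi * (a + l - (a + n))) = 0 := by
      rw [Complex.sin_eq_zero_iff]
      exact ⟨l - n, by push_cast; ring⟩
    rw [this]
    simp
  · refine bmi_telescope (C := (a - c) * (n - l))
      (T := fun k => (a + n + k) * (c + l + k) * bmiT a c n l k) (L := bmiS a c n l * 1)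
      (bmiT_summable ha hc n l) (mul_ne_zero (sub_ne_zero.mpr hac) hnl') ?_ ?_
    · refine ((bmiQ_tendsto ha hc n l).const_mul (bmiS a c n l)).congr fun k => ?_
      have x0 := bmi_add_ne (bmi_shift ha n) k
      have y0 := bmi_add_ne (bmi_shift hc l) k
      rw [bmiT_eq ha hc]
      field_simp
    · intro k
      simp only [bmiT_tele ha hc]
      ring

lemma bmi_tsum_eq {a c : ℂ} (ha : ∀ m : ℤ, a ≠ (m : ℂ)) (hc : ∀ m : ℤ, c ≠ (m : ℂ))
    (hac : ∀ m : ℤ, m ≠ 0 → a - c ≠ (m : ℂ)) (n : ℤ) :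
    Complex.Gamma (1 + a - c) * Complex.Gamma (1 + c - a) * ∑' k, bmiT a c n n k = 1 := by
  have hpi : (Real.pi : ℂ) ≠ 0 := by exact_mod_cast Real.pi_ne_zero
  have sa := bmi_sin_ne ha
  have sc := bmi_sin_ne hc
  have hε : ((-1 : ℂ) ^ n) * (-1) ^ n = 1 := by
    rw [← mul_zpow]; simp
  have h : ∀ k, bmiT a c n n k = bmiS a c n n * ((a + n + k) * (c + n + k))⁻¹ := by
    intro k
    rw [bmiT_eq ha hc, div_self (bmiQ_ne ha hc n k)]
    ring
  have hS : bmiS a c n n = Complex.sin (Real.pi * a) * Complex.sin (Real.pi * c) / Real.pi ^ 2 := by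
    unfold bmiS
    rw [hε]
    ring
  simp_rw [h]
  rw [tsum_mul_left, hS]
  by_cases e : a = c
  · subst e
    rw [bmi_sq_sum (bmi_shift ha n), bmi_sin_shift, show 1 + a - a = 1 by ring, Complex.Gamma_one]
    have h0 : ((-1 : ℂ) ^ n) ≠ 0 := left_ne_zero_of_mul_eq_one hε
    generalize (-1 : ℂ) ^ n = ε at *
    field_simp
    linear_combination -hε
  · have hz : ∀ m : ℤ, a - c ≠ m := by
      intro m
      by_cases hm : m = 0
      · subst hm
        simpa [sub_eq_zero] using e
      · exact hac m hm
    rw [bmi_cot_sum (bmi_shift ha n) (bmi_shift hc n) (by simpa using e), bmi_sin_shift,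
      bmi_sin_shift]
    have g := bmi_Gamma_refl hz
    have g1 := bmi_Gamma_ne (bmi_one_sub hz)
    have g2 := bmi_Gamma_ne (z := 1 + (a - c)) (by simpa [add_comm] using bmi_shift hz 1)
    have g3 := bmi_sin_ne hz
    have hz0 : a - c ≠ 0 := sub_ne_zero.mpr e
    rw [show c + n - (a + n) = -(a - c) by ring, show 1 + c - a = 1 - (a - c) by ring,
      add_sub_assoc, mul_neg, Complex.sin_neg]
    have h0 : ((-1 : ℂ) ^ n) ≠ 0 := left_ne_zero_of_mul_eq_one hε
    generalize (-1 : ℂ) ^ n = ε at *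
    generalize a - c = z at *
    field_simp at g ⊢
    have hε' : ε ^ 2 = 1 := by rw [pow_two]; exact hε
    rw [hε']
    linear_combination -g

lemma bmi_half {a c : ℂ} (ha : ∀ m : ℤ, a ≠ (m : ℂ)) (hc : ∀ m : ℤ, c ≠ (m : ℂ))
    (hac : ∀ m : ℤ, m ≠ 0 → a - c ≠ (m : ℂ)) (n l : ℤ) :
    (Summable fun k : ℤ => ‖fMat a c n k * gMat a c k l‖) ∧
      (∑' k : ℤ, fMat a c n k * gMat a c k l) = (if n = l then 1 else 0) := by
  simp_rw [bmi_fg]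
  refine ⟨((bmiT_summable ha hc n l).mul_left _).norm, ?_⟩
  rw [tsum_mul_left]
  split_ifs with h
  · subst h
    exact bmi_tsum_eq ha hc hac n
  · rw [bmi_tsum_ne ha hc h, mul_zero]

lemma bmi_gf (a c : ℂ) (n l k : ℤ) : gMat a c n k * fMat a c k l = fMat c a n k * gMat c a k l := by
  unfold fMat gMat
  rw [add_right_comm (1 + c) (k : ℂ), sub_right_comm (1 - a) (k : ℂ),
    add_right_comm (1 + a) (k : ℂ), sub_right_comm (1 - c) (k : ℂ)]

/-- A bilateral matrix inverse extracted from Dougall's `₂H₂` summation: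
the infinite matrices `F = (f_{nk})_{n,k ∈ ℤ}` and `G = (g_{kl})_{k,l ∈ ℤ}` are
inverses of each other, both bilateral sums converging absolutely. -/
theorem bilateral_matrix_inverse (a c : ℂ)
    (ha : ∀ m : ℤ, a ≠ (m : ℂ)) (hc : ∀ m : ℤ, c ≠ (m : ℂ))
    (hac : ∀ m : ℤ, m ≠ 0 → a - c ≠ (m : ℂ)) :
    ∀ n l : ℤ,
      (Summable fun k : ℤ => ‖fMat a c n k * gMat a c k l‖) ∧
      (∑' k : ℤ, fMat a c n k * gMat a c k l) = (if n = l then 1 else 0) ∧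
      (Summable fun k : ℤ => ‖gMat a c n k * fMat a c k l‖) ∧
      (∑' k : ℤ, gMat a c n k * fMat a c k l) = (if n = l then 1 else 0) := by
  intro n l
  obtain ⟨h1, h2⟩ := bmi_half ha hc hac n l
  have hca : ∀ m : ℤ, m ≠ 0 → c - a ≠ (m : ℂ) := by
    intro m hm h
    apply hac (-m) (by simpa using hm)
    push_cast
    linear_combination -h
  obtain ⟨h3, h4⟩ := bmi_half hc ha hca n l
  refine ⟨h1, h2, ?_, ?_⟩
  · simpa only [bmi_gf] using h3
  · simpa only [bmi_gf] using h4
end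

section
/- Let a,b,c ∈ ℂ, let k be an arbitrary integer and M a non-negative integer, and assume the parameters are generic (no gamma function on the right-hand side is evaluated at a nonpositive integer, and no shifted factorial appearing in a denominator vanishes). Then the bilateral sum ₃H₃[a, c+k, 1+c−b+M ; 1+a+k, 1+c+M, 1+c−b ; 1] = Σ_{j=−∞}^{∞} ((a)_j (c+k)_j (1+c−b+M)_j)/((1+a+k)_j (1+c+M)_j (1+c−b)_j) converges absolutely and equals [Γ(1+a)Γ(1−a)Γ(1+c)Γ(1−c)/(Γ(1+a−c)Γ(1+c−a))] · [((−M)_k (1+a)_k (b)_k)/((1)_k (c)_k (a+b−c−M)_k)] · [((1+c)_M (1+c−a−b)_M)/((1+c−a)_M (1+c−b)_M)]. -/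
open Complex

/-- The shifted factorial `(a)_k = Γ(a+k)/Γ(a)` for integer `k`, given by the
(generically equal) product formulas. -/
noncomputable def poch (a : ℂ) (k : ℤ) : ℂ :=
  if 0 ≤ k then ∏ j ∈ Finset.range k.toNat, (a + (j : ℂ))
  else (∏ j ∈ Finset.range (-k).toNat, (a - 1 - (j : ℂ)))⁻¹

open Filter Topology Finset

lemma HasSum.congr_fun2 {ι : Type} {f g : ι → ℂ} {s : ℂ} (h : HasSum f s) (e : ∀ i, g i = f i) :
    HasSum g s := (funext e : g = f) ▸ h

lemma HasSum.congr_val {ι : Type} {f : ι → ℂ} {s t : ℂ} (h : HasSum f s) (e : t = s) :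
    HasSum f t := e ▸ h

lemma summable_two (a c : ℂ) : Summable fun j : ℤ => ((a + j) * (c + j))⁻¹ := by
  apply EisensteinSeries.summable_inv_of_isBigO_rpow_inv (a := 2) (by norm_cast)
  simpa [pow_two, mul_comm] using (EisensteinSeries.linear_inv_isBigO_right 1 a).mul
    (EisensteinSeries.linear_inv_isBigO_right 1 c)

lemma hasSum_two_ne {a c : ℂ} (ha : a ∈ integerComplement) (hc : c ∈ integerComplement)
    (hac : a ≠ c) : HasSum (fun j : ℤ => ((a + j) * (c + j))⁻¹)
      ((Real.pi * cot (Real.pi * a) - Real.pi * cot (Real.pi * c)) / (c - a)) := by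
  obtain ⟨s, hs⟩ := summable_two a c
  have h1 := hs.nat_add_neg
  have h2 := (hasSum_nat_add_iff' 1).mpr h1
  have h3 : HasSum (fun n : ℕ => (1 / (c - a)) * (cotTerm a n - cotTerm c n))
      ((1 / (c - a)) * ((Real.pi * cot (Real.pi * a) - 1 / a)
        - (Real.pi * cot (Real.pi * c) - 1 / c))) := by
    rw [cot_series_rep' ha, cot_series_rep' hc]
    exact ((summable_cotTerm ha).hasSum.sub (summable_cotTerm hc).hasSum).mul_left _
  have hca : c - a ≠ 0 := sub_ne_zero.mpr hac.symm
  have ha0 := integerComplement.ne_zero ha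
  have hc0 := integerComplement.ne_zero hc
  have h4 := h2.unique (h3.congr_fun2 ?_)
  · convert hs using 1
    simp at h4
    field_simp at h4 ⊢
    apply mul_left_cancel₀ (mul_ne_zero ha0 hc0)
    linear_combination -h4
  · intro n
    simp only [cotTerm]
    have q1 : a + (n + 1) ≠ 0 := by exact_mod_cast integerComplement_add_ne_zero ha (n + 1 : ℤ)
    have q2 : a - (n + 1) ≠ 0 := by
      simpa [sub_eq_add_neg] using integerComplement_add_ne_zero ha (-(n + 1) : ℤ)
    have q3 : c + (n + 1) ≠ 0 := by exact_mod_cast integerComplement_add_ne_zero hc (n + 1 : ℤ)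
    have q4 : c - (n + 1) ≠ 0 := by
      simpa [sub_eq_add_neg] using integerComplement_add_ne_zero hc (-(n + 1) : ℤ)
    have t1 : ((a + (n + 1)) * (c + (n + 1)))⁻¹
        = (1 / (c - a)) * (1 / (a + (n + 1)) - 1 / (c + (n + 1))) := by field_simp; ring
    have t2 : ((a - (n + 1)) * (c - (n + 1)))⁻¹
        = (1 / (c - a)) * (1 / (a - (n + 1)) - 1 / (c - (n + 1))) := by field_simp; ring
    push_cast
    rw [← sub_eq_add_neg, ← sub_eq_add_neg, t1, t2]
    ring

lemma gamma_refl {x : ℂ} (hx : x ≠ 0) :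
    Gamma (1 + x) * Gamma (1 - x) = Real.pi * x / sin (Real.pi * x) := by
  rw [add_comm, Gamma_add_one x hx, mul_assoc, Gamma_mul_Gamma_one_sub]; ring

lemma sin_ne {a : ℂ} (ha : a ∈ integerComplement) : sin (Real.pi * a) ≠ 0 :=
  sin_pi_mul_ne_zero ha

noncomputable def GG (a c : ℂ) : ℂ := Complex.Gamma (1 + a) * Complex.Gamma (1 - a) * Complex.Gamma (1 + c) *
          Complex.Gamma (1 - c) / (Complex.Gamma (1 + a - c) * Complex.Gamma (1 + c - a))

lemma hasSum_two_gamma_ne {a c : ℂ} (ha : a ∈ integerComplement) (hc : c ∈ integerComplement)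
    (hac : a ≠ c) : HasSum (fun j : ℤ => ((a + j) * (c + j))⁻¹) (GG a c / (a * c)) := by
  convert hasSum_two_ne ha hc hac using 1
  have ha0 := integerComplement.ne_zero ha
  have hc0 := integerComplement.ne_zero hc
  have h1 := gamma_refl ha0
  have h2 := gamma_refl hc0
  have h3 := gamma_refl (sub_ne_zero.mpr hac)
  have e1 : 1 + a - c = 1 + (a - c) := by ring
  have e2 : 1 + c - a = 1 - (a - c) := by ring
  have e3 : sin (Real.pi * (a - c)) = sin (Real.pi * a) * cos (Real.pi * c)
      - cos (Real.pi * a) * sin (Real.pi * c) := by rw [mul_sub, Complex.sin_sub]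
  have hca : c - a ≠ 0 := sub_ne_zero.mpr hac.symm
  have hca' : a - c ≠ 0 := sub_ne_zero.mpr hac
  have s1 := sin_ne ha
  have s2 := sin_ne hc
  have hpi : (Real.pi : ℂ) ≠ 0 := by exact_mod_cast Real.pi_ne_zero
  rw [GG, h1, mul_assoc, h2, e1, e2, h3, e3, cot, cot]
  field_simp
  ring

/-- The case `a = c` by continuity. -/
lemma hasSum_two_gamma {a c : ℂ} (ha : a ∈ integerComplement) (hc : c ∈ integerComplement) :
    HasSum (fun j : ℤ => ((a + j) * (c + j))⁻¹) (GG a c / (a * c)) := by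
  rcases eq_or_ne a c with rfl | hac
  swap
  · exact hasSum_two_gamma_ne ha hc hac
  have hopen : IsOpen integerComplement := isOpen_compl_range_intCast
  have hmem : ∀ᶠ z in 𝓝[≠] a, z ∈ integerComplement :=
    mem_nhdsWithin_of_mem_nhds (hopen.mem_nhds ha)
  have ha0 := integerComplement.ne_zero ha
  have hd : ∀ z ∈ integerComplement, ∀ m : ℕ, 1 + z ≠ -m ∧ 1 - z ≠ -m := by
    intro z hz m
    constructor
    · intro h
      apply hz
      exact ⟨-m-1, by push_cast; linear_combination -h⟩
    · intro h
      apply hz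
      exact ⟨m+1, by push_cast; linear_combination h⟩
  have lim2 : Tendsto (fun z => GG a z / (a * z)) (𝓝[≠] a) (𝓝 (GG a a / (a * a))) := by
    apply tendsto_nhdsWithin_of_tendsto_nhds
    have c1 : ContinuousAt (fun z : ℂ => Gamma (1 + z)) a :=
      ContinuousAt.comp' (f := fun z => 1 + z) (differentiableAt_Gamma _ (fun m => (hd a ha m).1)).continuousAt (by fun_prop)
    have c2 : ContinuousAt (fun z : ℂ => Gamma (1 - z)) a :=
      ContinuousAt.comp' (f := fun z => 1 - z) (differentiableAt_Gamma _ (fun m => (hd a ha m).2)).continuousAt (by fun_prop)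
    have d1 : DifferentiableAt ℂ Gamma 1 := differentiableAt_Gamma_one
    have c3 : ContinuousAt (fun z : ℂ => Gamma (1 + a - z)) a :=
      ContinuousAt.comp' (f := fun z => 1 + a - z) (by simpa using d1.continuousAt) (by fun_prop)
    have c4 : ContinuousAt (fun z : ℂ => Gamma (1 + z - a)) a :=
      ContinuousAt.comp' (f := fun z => 1 + z - a) (by simpa using d1.continuousAt) (by fun_prop)
    have : ContinuousAt (fun z => GG a z / (a * z)) a := by
      unfold GG
      refine ContinuousAt.div (ContinuousAt.div ((continuousAt_const.mul c1).mul c2) (c3.mul c4) ?_) (by fun_prop) ?_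
      · simp
      · simp [ha0]
    exact this
  have lim1 : Tendsto (fun z => ∑' j : ℤ, ((a + j) * (z + j))⁻¹) (𝓝[≠] a)
      (𝓝 (∑' j : ℤ, ((a + j) * (a + j))⁻¹)) := by
    obtain ⟨ε, hε, hball⟩ := Metric.isOpen_iff.mp hopen a ha
    have hlow : ∀ j : ℤ, ε ≤ ‖a + j‖ := by
      intro j
      by_contra! h
      refine hball (a := ((-j : ℤ) : ℂ)) ?_ ⟨-j, rfl⟩
      rw [Metric.mem_ball, dist_comm, dist_eq_norm]
      simpa using h
    refine tendsto_tsum_of_dominated_convergence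
      (bound := fun j : ℤ => 2 * ‖((a + j) * (a + j))⁻¹‖) ((summable_two a a).norm.mul_left 2) ?_ ?_
    · intro j
      have hj := integerComplement_add_ne_zero ha j
      apply tendsto_nhdsWithin_of_tendsto_nhds
      have : ContinuousAt (fun z : ℂ => ((a + j) * (z + j))⁻¹) a :=
        ContinuousAt.inv₀ (by fun_prop) (mul_ne_zero hj hj)
      exact this
    · apply mem_nhdsWithin_of_mem_nhds
      filter_upwards [Metric.ball_mem_nhds a (half_pos hε)] with z hz j
      rw [Metric.mem_ball, dist_eq_norm] at hz
      have hj := hlow j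
      have h1 : ‖a + j‖ ≤ 2 * ‖z + j‖ := by
        have : ‖a + j‖ ≤ ‖z + j‖ + ‖z - a‖ := by
          have := norm_sub_le (z + j : ℂ) (z - a)
          rw [show (z + j : ℂ) - (z - a) = a + j by ring] at this
          exact this
        linarith
      have hp : 0 < ‖a + j‖ := by linarith
      have hp' : 0 < ‖z + j‖ := by linarith
      rw [norm_inv, norm_inv, norm_mul, norm_mul, mul_inv, mul_inv]
      have : ‖z + j‖⁻¹ ≤ 2 * ‖a + j‖⁻¹ := by
        rw [inv_le_comm₀ hp' (by positivity), mul_inv, inv_inv]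
        linarith
      calc _ ≤ ‖a + j‖⁻¹ * (2 * ‖a + j‖⁻¹) := by gcongr
        _ = _ := by ring
  have key := tendsto_nhds_unique lim1 (lim2.congr' ?_)
  · rw [← key]; exact (summable_two a a).hasSum
  · filter_upwards [hmem, self_mem_nhdsWithin] with z hz hne
    exact (hasSum_two_gamma_ne ha hz (Ne.symm hne)).tsum_eq.symm

/-- rising factorial -/
noncomputable def rf (y : ℂ) (n : ℕ) : ℂ := ∏ i ∈ range n, (y + i)

lemma rf_succ (y : ℂ) (n : ℕ) : rf y (n+1) = rf y n * (y + n) := prod_range_succ _ _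

lemma rf_add (y : ℂ) (m n : ℕ) : rf y (m+n) = rf y m * rf (y + m) n := by
  simp only [rf, prod_range_add]; congr 1; apply prod_congr rfl; intros; push_cast; ring

lemma rf_one (y : ℂ) : rf y 1 = y := by simp [rf]
lemma rf_zero (y : ℂ) : rf y 0 = 1 := by simp [rf]

lemma rf_succ' (y : ℂ) (n : ℕ) : rf y (n+1) = y * rf (y + 1) n := by
  rw [add_comm n 1, rf_add, rf_one]; simp

lemma ic_add {y : ℂ} (hy : y ∈ integerComplement) (n : ℤ) : y + n ∈ integerComplement :=
  (add_intCast_mem_integerComplement n).mpr hy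

lemma rf_ne_zero {y : ℂ} (hy : y ∈ integerComplement) (n : ℕ) : rf y n ≠ 0 := by
  refine prod_ne_zero_iff.mpr fun i _ => ?_
  exact_mod_cast integerComplement_add_ne_zero hy i

lemma hasSum_base {a : ℂ} (ha : a ∈ integerComplement) :
    HasSum (fun j : ℤ => (rf (a + j) 2)⁻¹) 0 := by
  have ha1 : a + 1 ∈ integerComplement := by exact_mod_cast ic_add ha 1
  have := hasSum_two_gamma ha ha1
  have h0 : GG a (a+1) = 0 := by
    unfold GG
    have : 1 + a - (a + 1) = 0 := by ring
    rw [this]; simp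
  rw [h0, zero_div] at this
  refine this.congr_fun2 ?_
  intro j
  rw [show (2 : ℕ) = 1 + 1 from rfl, rf_succ, rf_one]
  push_cast
  ring

lemma hasSum_rf_inv {a : ℂ} (ha : a ∈ integerComplement) (m : ℕ) :
    HasSum (fun j : ℤ => (rf (a + j) (m + 2))⁻¹) 0 := by
  induction m with
  | zero => exact hasSum_base ha
  | succ m ih =>
    have h2 : HasSum (fun j : ℤ => (rf (a + (j + 1 : ℤ)) (m + 2))⁻¹) 0 :=
      (Equiv.hasSum_iff (f := fun j : ℤ => (rf (a + j) (m + 2))⁻¹) (Equiv.addRight (1 : ℤ))).mpr ih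
    have h3 := (ih.sub h2).mul_left (1 / ((m : ℂ) + 2))
    simp only [sub_zero, mul_zero] at h3
    refine h3.congr_fun2 fun j => ?_
    have hj : a + j ∈ integerComplement := ic_add ha j
    have e : a + ((j + 1 : ℤ) : ℂ) = a + j + 1 := by push_cast; ring
    rw [e]
    generalize a + j = y at hj
    have n1 := rf_ne_zero hj (m + 2 + 1)
    have e1 := rf_succ y (m + 2)
    have e2 := rf_succ' y (m + 2)
    have n3 : (m : ℂ) + 2 ≠ 0 := by exact_mod_cast (by omega : m + 2 ≠ 0)
    have n4 := n1
    rw [e1] at n1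
    rw [e2] at n4
    obtain ⟨p1, p2⟩ := mul_ne_zero_iff.mp n1
    obtain ⟨p3, p4⟩ := mul_ne_zero_iff.mp n4
    have e3 : rf y (m+2) * (y + (m + 2)) = y * rf (y + 1) (m + 2) := by
      rw [← e2, e1]; push_cast; ring
    have f1 : (rf y (m+2))⁻¹ = (y + (m + 2)) * (y * rf (y + 1) (m + 2))⁻¹ := by
      rw [← e3]; push_cast at p2; field_simp
    have : m + 1 + 2 = m + 2 + 1 := by ring
    rw [this, e2, f1]
    field_simp
    ring

open Polynomial in
lemma hasSum_poly {a : ℂ} (ha : a ∈ integerComplement) (n : ℕ) (Q : ℂ[X])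
    (hQ : Q.natDegree ≤ n) :
    HasSum (fun j : ℤ => Q.eval (j : ℂ) / rf (a + j) (n + 2)) 0 := by
  induction n generalizing Q with
  | zero =>
    rw [Polynomial.eq_C_of_natDegree_le_zero hQ]
    simpa [div_eq_mul_inv] using (hasSum_rf_inv ha 0).mul_left (Q.coeff 0)
  | succ n ih =>
    set r : ℂ := -(a + (n + 2))
    have hdeg : (Q /ₘ (X - C r)).natDegree ≤ n := by
      rw [natDegree_divByMonic _ (monic_X_sub_C r), natDegree_X_sub_C]; omega
    have h1 := (hasSum_rf_inv ha (n+1)).mul_left (Q.eval r)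
    have h2 := h1.add (ih _ hdeg)
    simp only [mul_zero, add_zero] at h2
    refine h2.congr_fun2 fun j => ?_
    have hj : a + j ∈ integerComplement := ic_add ha j
    have hmod := modByMonic_add_div Q (X - C r)
    rw [modByMonic_X_sub_C_eq_C_eval] at hmod
    have he := congrArg (Polynomial.eval (j : ℂ)) hmod
    simp only [eval_add, eval_C, eval_mul, eval_sub, eval_X] at he
    have e1 : rf (a + j) (n + 1 + 2) = rf (a + j) (n + 2) * (a + j + (n + 2)) := by
      rw [show n + 1 + 2 = n + 2 + 1 by ring, rf_succ]; push_cast; ring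
    have n1 := rf_ne_zero hj (n + 1 + 2)
    rw [e1] at n1
    obtain ⟨p1, p2⟩ := mul_ne_zero_iff.mp n1
    rw [← he, e1]
    field_simp
    simp only [r]
    ring

lemma poch_nat (y : ℂ) (n : ℕ) : poch y (n : ℤ) = rf y n := by
  simp [poch, rf]

lemma rf_neg (y : ℂ) (n : ℕ) : rf y n = (-1) ^ n * rf (1 - y - n) n := by
  unfold rf
  rw [← prod_range_reflect, ← card_range n, ← prod_const, card_range, ← prod_mul_distrib]
  apply prod_congr rfl
  intro i hi
  rw [mem_range] at hi
  have : ((n - 1 - i : ℕ) : ℂ) = n - 1 - i := by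
    rw [Nat.cast_sub (by omega), Nat.cast_sub (by omega)]; simp
  rw [this]; ring

lemma poch_neg (y : ℂ) (n : ℕ) : poch y (-(n : ℤ)) = (rf (y - n) n)⁻¹ := by
  rcases Nat.eq_zero_or_pos n with rfl | hn
  · simp [poch, rf]
  · have h : ¬ (0 ≤ -(n : ℤ)) := by omega
    rw [poch, if_neg h, rf, ← prod_range_reflect]
    congr 1
    simp only [neg_neg, Int.toNat_natCast]
    apply prod_congr rfl
    intro i hi
    rw [mem_range] at hi
    have : ((n - 1 - i : ℕ) : ℂ) = n - 1 - i := by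
      rw [Nat.cast_sub (by omega), Nat.cast_sub (by omega)]; simp
    rw [this]; ring

lemma ic_of_poch {y : ℂ} (h : ∀ j : ℤ, poch y j ≠ 0) : y ∈ integerComplement := by
  rintro ⟨n, rfl⟩
  rcases le_or_gt n 0 with hn | hn
  · obtain ⟨m, rfl⟩ : ∃ m : ℕ, n = -m := ⟨n.natAbs, by omega⟩
    apply h ((m + 1 : ℕ) : ℤ)
    rw [poch_nat, rf_succ]
    simp
  · obtain ⟨m, rfl⟩ : ∃ m : ℕ, n = m := ⟨n.natAbs, by omega⟩
    apply h (-(m : ℤ))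
    obtain ⟨p, rfl⟩ : ∃ p, m = p + 1 := ⟨m - 1, by omega⟩
    rw [poch_neg, rf_succ']
    simp

lemma poch_ne_zero {y : ℂ} (hy : y ∈ integerComplement) (j : ℤ) : poch y j ≠ 0 := by
  obtain ⟨n, rfl | rfl⟩ := j.eq_nat_or_neg
  · rw [poch_nat]; exact rf_ne_zero hy n
  · rw [poch_neg]
    apply inv_ne_zero
    have := ic_add hy (-n)
    push_cast at this
    rw [← sub_eq_add_neg] at this
    exact rf_ne_zero this n

lemma poch_add_one {y : ℂ} (hy : y ∈ integerComplement) (j : ℤ) :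
    poch y (j + 1) = poch y j * (y + j) := by
  rcases le_or_gt 0 j with hn | hn
  · obtain ⟨m, rfl⟩ : ∃ m : ℕ, j = m := ⟨j.natAbs, by omega⟩
    have := poch_nat y (m + 1)
    push_cast at this
    rw [this, poch_nat, rf_succ]; simp
  · obtain ⟨m, rfl⟩ : ∃ m : ℕ, j = -((m + 1 : ℕ) : ℤ) := ⟨j.natAbs - 1, by omega⟩
    rw [show -((m + 1 : ℕ) : ℤ) + 1 = -(m : ℤ) by push_cast; ring, poch_neg, poch_neg, rf_succ']
    have h0 := integerComplement_add_ne_zero hy (-((m + 1 : ℕ) : ℤ))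
    push_cast at h0 ⊢
    rw [show y - ((m : ℂ) + 1) + 1 = y - m by ring,
      show y - ((m : ℂ) + 1) = y + (-1 + -(m : ℂ)) by ring]
    have h0' : y + (-1 + -(m : ℂ)) ≠ 0 := by convert h0 using 2; ring
    rw [show y + -((m : ℂ) + 1) = y + (-1 + -(m : ℂ)) by ring, mul_inv]
    generalize y + (-1 + -(m : ℂ)) = t at h0'
    rw [mul_comm, ← mul_assoc, mul_inv_cancel₀ h0', one_mul]

lemma poch_add {y : ℂ} (hy : y ∈ integerComplement) (j l : ℤ) :
    poch y (j + l) = poch y j * poch (y + j) l := by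
  have hj := ic_add hy j
  induction l using Int.induction_on with
  | zero => simp [poch]
  | succ n ih =>
    rw [← add_assoc, poch_add_one hy, poch_add_one hj, ih]; push_cast; ring
  | pred n ih =>
    have h1 := poch_add_one hy (j + (-n - 1))
    have h2 := poch_add_one hj (-n - 1)
    rw [show j + (-(n : ℤ) - 1) + 1 = j + -n by ring, ih] at h1
    rw [show (-(n : ℤ) - 1) + 1 = -n by ring] at h2
    rw [h2] at h1
    have h0 := integerComplement_add_ne_zero hy (j + (-n - 1))
    push_cast at h0 h1
    apply mul_right_cancel₀ h0
    linear_combination -h1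

lemma poch_ratio {y : ℂ} (hy : y ∈ integerComplement) (j l : ℤ) :
    poch y j / poch (y + l) j = poch y l / poch (y + j) l := by
  have h1 := poch_add hy j l
  have h2 := poch_add hy l j
  rw [add_comm, h1] at h2
  rw [div_eq_div_iff (poch_ne_zero (ic_add hy l) j) (poch_ne_zero (ic_add hy j) l), h2]

open Polynomial in
/-- rising factorial as a polynomial -/
noncomputable def PR (y : ℂ) (n : ℕ) : ℂ[X] := ∏ i ∈ range n, (X + C (y + i))

lemma PR_eval (y x : ℂ) (n : ℕ) : (PR y n).eval x = rf (y + x) n := by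
  simp only [PR, rf, Polynomial.eval_prod]
  apply prod_congr rfl; intros; simp; ring

lemma PR_deg (y : ℂ) (n : ℕ) : (PR y n).natDegree ≤ n := by
  refine (Polynomial.natDegree_prod_le _ _).trans ?_
  simp only [Polynomial.natDegree_X_add_C]
  simp

lemma PR_mul_deg (y z : ℂ) (m n : ℕ) : (PR y m * PR z n).natDegree ≤ m + n :=
  Polynomial.natDegree_mul_le.trans (add_le_add (PR_deg y m) (PR_deg z n))

lemma hasSum_PR {a : ℂ} (ha : a ∈ integerComplement) (y z : ℂ) (m n : ℕ) :
    HasSum (fun j : ℤ => rf (y + j) m * rf (z + j) n / rf (a + j) (m + n + 2)) 0 := by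
  simpa [PR_eval] using hasSum_poly ha (m + n) _ (PR_mul_deg y z m n)

lemma lemA {a c : ℂ} (ha : a ∈ integerComplement) (hc : c ∈ integerComplement) (κ L r : ℕ)
    (hr : r < κ) : HasSum (fun j : ℤ => rf (1 + c - (-(r : ℂ)) + j) (κ + L) /
      (rf (a + j) (κ + 1) * rf (c + κ + j) (L + 1))) 0 := by
  obtain ⟨t, rfl⟩ : ∃ t, κ = r + 1 + t := ⟨κ - (r + 1), by omega⟩
  refine (hasSum_PR ha (1 + c + r) (c + (r + 1 + t) + (L + 1)) t r).congr_fun2 fun j => ?_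
  have hcj : c + ((r + 1 + t : ℕ) : ℂ) + j ∈ integerComplement := by
    have := ic_add (ic_add hc ((r + 1 + t : ℕ) : ℤ)) j
    exact_mod_cast this
  have n1 := rf_ne_zero hcj (L + 1)
  rw [show r + 1 + t + L = t + (L + 1) + r by ring, rf_add, rf_add,
    show r + 1 + t + 1 = t + r + 2 by ring]
  have e1 : 1 + c - (-(r : ℂ)) + j + t = c + ((r + 1 + t : ℕ) : ℂ) + j := by push_cast; ring
  have e2 : 1 + c - (-(r : ℂ)) + j + (t + (L + 1) : ℕ) = c + (r + 1 + t) + (L + 1) + j := by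
    push_cast; ring
  have e3 : 1 + c - (-(r : ℂ)) + j = 1 + c + r + j := by ring
  rw [e1, e2, e3]
  field_simp

lemma lemB {a c : ℂ} (ha : a ∈ integerComplement) (hc : c ∈ integerComplement) (κ L s : ℕ)
    (hs : s < L) : HasSum (fun j : ℤ => rf (1 + c - (c - a + s + 1) + j) (κ + L) /
      (rf (a + j) (κ + 1) * rf (c + κ + j) (L + 1))) 0 := by
  obtain ⟨t, rfl⟩ : ∃ t, L = s + 1 + t := ⟨L - (s + 1), by omega⟩
  have hck : c + κ ∈ integerComplement := by exact_mod_cast ic_add hc κ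
  refine (hasSum_PR hck (a - s) (a + (κ + 1)) s t).congr_fun2 fun j => ?_
  have n1 := rf_ne_zero (ic_add ha j) (κ + 1)
  rw [show κ + (s + 1 + t) = s + (κ + 1) + t by ring, rf_add, rf_add,
    show s + 1 + t + 1 = s + t + 2 by ring]
  have e1 : 1 + c - (c - a + s + 1) + j + s = a + j := by ring
  have e2 : 1 + c - (c - a + s + 1) + j + (s + (κ + 1) : ℕ) = a + (κ + 1) + j := by
    push_cast; ring
  have e3 : 1 + c - (c - a + s + 1) + j = a - s + j := by ring
  rw [e1, e2, e3]
  field_simp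

lemma rf_apart {a c : ℂ} (hac : ∀ n : ℤ, n ≠ 0 → a - c ≠ n) (κ : ℕ) : rf (a - c - κ) κ ≠ 0 := by
  refine prod_ne_zero_iff.mpr fun i hi h => ?_
  rw [mem_range] at hi
  apply hac (κ - i) (by omega)
  push_cast
  linear_combination h

open Polynomial in
lemma lemC {a c : ℂ} (ha : a ∈ integerComplement) (hc : c ∈ integerComplement) (κ L : ℕ)
    (hac : ∀ n : ℤ, n ≠ 0 → a - c ≠ n) :
    HasSum (fun j : ℤ => rf (1 + c - (-(κ : ℂ)) + j) (κ + L) /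
      (rf (a + j) (κ + 1) * rf (c + κ + j) (L + 1)))
      (rf (L + 1) κ / rf (a - c - κ) κ * (GG a c / (a * c))) := by
  set q := rf (L + 1) κ / rf (a - c - κ) κ with hq
  have hne := rf_apart hac κ
  have hK : HasSum (fun j : ℤ => q * ((a + κ + j) * (c + κ + j))⁻¹) (q * (GG a c / (a * c))) := by
    refine HasSum.mul_left q ?_
    have := (Equiv.hasSum_iff (f := fun j : ℤ => ((a + j) * (c + j))⁻¹)
      (Equiv.addRight (κ : ℤ))).mpr (hasSum_two_gamma ha hc)
    refine this.congr_fun2 fun j => ?_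
    simp
    ring
  -- the quotient polynomial
  set D : ℂ[X] := PR (c + κ + L + 1) κ - C q * PR a κ with hD
  have hroot : D.eval (-(c + κ)) = 0 := by
    simp only [hD, eval_sub, eval_mul, eval_C, PR_eval]
    rw [show c + κ + L + 1 + -(c + κ) = L + 1 by ring, show a + -(c + κ) = a - c - κ by ring, hq]
    field_simp
    ring
  have hsplit : ∀ x : ℂ, (x + c + κ) * (D /ₘ (X - C (-(c + κ)))).eval x
      = rf (c + κ + L + 1 + x) κ - q * rf (a + x) κ := by
    intro x
    have hmod := modByMonic_add_div D (X - C (-(c + κ)))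
    rw [modByMonic_X_sub_C_eq_C_eval, hroot] at hmod
    have he := congrArg (Polynomial.eval x) hmod
    simp only [eval_add, eval_C, eval_mul, eval_sub, eval_X, zero_add] at he
    rw [show x + c + κ = x - -(c + κ) by ring, he]
    simp only [hD, eval_sub, eval_mul, eval_C, PR_eval]
  have hdeg : D.natDegree ≤ κ := by
    refine (natDegree_sub_le _ _).trans (max_le (PR_deg _ _) ?_)
    exact (natDegree_C_mul_le _ _).trans (PR_deg _ _)
  have hE : HasSum (fun j : ℤ => (D /ₘ (X - C (-(c + κ)))).eval (j : ℂ) / rf (a + j) (κ + 1)) 0 := by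
    rcases κ with _ | n
    · have : D = 0 := by
        simp [hD, PR, hq, rf]
      rw [this]
      simp
    · apply hasSum_poly ha
      rw [natDegree_divByMonic _ (monic_X_sub_C _), natDegree_X_sub_C]; omega
  have hT := hK.add hE
  rw [add_zero] at hT
  refine hT.congr_fun2 fun j => ?_
  have hck : c + κ ∈ integerComplement := by exact_mod_cast ic_add hc κ
  have hckj := ic_add hck j
  have hcL : c + κ + j + 1 ∈ integerComplement := by exact_mod_cast ic_add hckj 1
  have n1 := rf_ne_zero hcL L
  have n2 := integerComplement.ne_zero hckj
  have n3 := rf_ne_zero (ic_add ha j) κ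
  have n4 : a + j + κ ≠ 0 := by exact_mod_cast integerComplement.ne_zero (ic_add (ic_add ha j) κ)
  have n5 : a + κ + j ≠ 0 := by convert n4 using 1; ring
  have h := hsplit j
  rw [add_comm κ L, rf_add, rf_succ, rf_succ' (c + κ + j)]
  rw [show 1 + c - (-(κ : ℂ)) + j = c + κ + j + 1 by ring,
    show c + κ + j + 1 + L = c + κ + L + 1 + j by ring]
  rw [show (j : ℂ) + c + κ = c + κ + j by ring] at h
  rw [show a + κ + j = a + j + κ by ring] at n5 ⊢
  generalize eval (j : ℂ) (D /ₘ (X - C (-(c + κ)))) = w at h ⊢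
  generalize c + κ + j = u at *
  generalize rf (u + 1) L = v at *
  generalize a + j + κ = z at *
  field_simp
  linear_combination -h

noncomputable def lag (a b c : ℂ) (κ L : ℕ) : ℂ :=
  (∏ r ∈ range κ, (b + r) / (-(κ : ℂ) + r)) *
    ∏ s ∈ range L, (b - (c - a + s + 1)) / (-(κ : ℂ) - (c - a + s + 1))

noncomputable def nod (a c : ℂ) (κ : ℕ) : Option (ℕ ⊕ ℕ) → ℂ
  | none => -(κ : ℂ)
  | some (Sum.inl r) => -(r : ℂ)
  | some (Sum.inr s) => c - a + s + 1

open Polynomial in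
lemma hasSum_main {a c : ℂ} (b : ℂ) (ha : a ∈ integerComplement) (hc : c ∈ integerComplement)
    (κ L : ℕ) (hac : ∀ n : ℤ, n ≠ 0 → a - c ≠ n) :
    HasSum (fun j : ℤ => rf (1 + c - b + j) (κ + L) /
      (rf (a + j) (κ + 1) * rf (c + κ + j) (L + 1)))
      (lag a b c κ L * (rf (L + 1) κ / rf (a - c - κ) κ * (GG a c / (a * c)))) := by
  set s' : Finset (ℕ ⊕ ℕ) := (range κ).disjSum (range L) with hs'
  set s : Finset (Option (ℕ ⊕ ℕ)) := insertNone s' with hs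
  set v := nod a c κ with hv
  have hinj : Set.InjOn v s := by
    have x1 : ∀ m n : ℕ, -(m : ℂ) ≠ c - a + n + 1 := by
      intro m n h
      apply hac (m + n + 1) (by omega)
      push_cast
      linear_combination h
    rintro (_ | (r | t)) h1 (_ | (r' | t')) h2 h
    · rfl
    · simp [s, s', v, nod] at h1 h2 h; omega
    · exact absurd h (x1 _ _)
    · simp [s, s', v, nod] at h1 h2 h; omega
    · simp [v, nod] at h; rw [h]
    · exact absurd h (x1 _ _)
    · exact absurd h.symm (x1 _ _)
    · exact absurd h.symm (x1 _ _)
    · simp [v, nod] at h; rw [h]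
  have hcard : #s = κ + L + 1 := by simp [s, s']
  have hpt : ∀ x : ℂ, rf (1 + c - b + x) (κ + L)
      = ∑ i ∈ s, (Lagrange.basis s v i).eval b * rf (1 + c - v i + x) (κ + L) := by
    intro x
    set P : ℂ[X] := ∏ m ∈ range (κ + L), (C (1 + c + x + m) - X) with hP
    have hPe : ∀ y, P.eval y = rf (1 + c - y + x) (κ + L) := by
      intro y
      simp only [hP, rf, eval_prod]
      apply prod_congr rfl; intros; simp; ring
    have hPd : P.degree < #s := by
      rw [hcard]
      refine lt_of_le_of_lt degree_le_natDegree ?_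
      have : P.natDegree ≤ κ + L := by
        refine (natDegree_prod_le _ _).trans ?_
        refine (sum_le_sum (g := fun _ => 1) fun i _ => ?_).trans (by simp)
        refine (natDegree_sub_le _ _).trans ?_
        rw [natDegree_C, natDegree_X]; simp
      exact_mod_cast Nat.lt_succ_of_le this
    have h := congrArg (Polynomial.eval b) (Lagrange.eq_interpolate hinj hPd)
    rw [hPe, Lagrange.interpolate_apply, eval_finsetSum] at h
    rw [h]
    apply sum_congr rfl
    intro i _
    rw [eval_mul, eval_C, hPe]; ring
  have hbasis : (Lagrange.basis s v none).eval b = lag a b c κ L := by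
    have her : s.erase none = s'.map Function.Embedding.some := by
      ext i; cases i <;> simp [s]
    rw [Lagrange.basis, her, eval_prod, prod_map, hs', prod_disjSum, lag]
    congr 1 <;>
    · apply prod_congr rfl
      intro i _
      simp [Lagrange.basisDivisor, v, nod, div_eq_mul_inv]
      ring
  have hnone : none ∈ s := by simp [s]
  have hsum : HasSum (fun j : ℤ => ∑ i ∈ s, (Lagrange.basis s v i).eval b *
      (rf (1 + c - v i + j) (κ + L) / (rf (a + j) (κ + 1) * rf (c + κ + j) (L + 1))))
      (∑ i ∈ s, (Lagrange.basis s v i).eval b * (if i = none then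
        (rf (L + 1) κ / rf (a - c - κ) κ * (GG a c / (a * c))) else 0)) := by
    apply hasSum_sum
    rintro (_ | (r | t)) hi
    · exact (lemC ha hc κ L hac).mul_left _
    · exact (lemA ha hc κ L r (by simpa [s, s'] using hi)).mul_left _
    · exact (lemB ha hc κ L t (by simpa [s, s'] using hi)).mul_left _
  simp only [mul_ite, mul_zero, sum_ite_eq', hnone, if_true, hbasis] at hsum
  refine hsum.congr_fun2 fun j => ?_
  rw [hpt, sum_div]
  apply sum_congr rfl
  intros
  rw [mul_div_assoc]

/-- A `₃H₃` summation: for generic parameters `a, b, c`, an arbitrary integer `k` and a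
non-negative integer `M`,
`₃H₃[a, c+k, 1+c−b+M; 1+a+k, 1+c+M, 1+c−b; 1]` converges absolutely and has the stated
closed-form evaluation. -/
theorem bilateral_3H3 (a b c : ℂ) (k : ℤ) (M : ℕ)
    (hg1 : ∀ m : ℕ, 1 + a ≠ -(m : ℂ)) (hg2 : ∀ m : ℕ, 1 - a ≠ -(m : ℂ))
    (hg3 : ∀ m : ℕ, 1 + c ≠ -(m : ℂ)) (hg4 : ∀ m : ℕ, 1 - c ≠ -(m : ℂ))
    (hg5 : ∀ m : ℕ, 1 + a - c ≠ -(m : ℂ)) (hg6 : ∀ m : ℕ, 1 + c - a ≠ -(m : ℂ))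
    (hd1 : ∀ j : ℤ, poch (1 + a + k) j ≠ 0)
    (hd2 : ∀ j : ℤ, poch (1 + c + M) j ≠ 0)
    (hd3 : ∀ j : ℤ, poch (1 + c - b) j ≠ 0)
    (hd4 : poch c k ≠ 0) (hd5 : poch (a + b - c - M) k ≠ 0)
    (hd6 : poch (1 + c - a) M ≠ 0) (hd7 : poch (1 + c - b) M ≠ 0) :
    (Summable fun j : ℤ =>
      ‖poch a j * poch (c + k) j * poch (1 + c - b + M) j /
        (poch (1 + a + k) j * poch (1 + c + M) j * poch (1 + c - b) j)‖) ∧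
    (∑' j : ℤ, poch a j * poch (c + k) j * poch (1 + c - b + M) j /
        (poch (1 + a + k) j * poch (1 + c + M) j * poch (1 + c - b) j)) =
      Complex.Gamma (1 + a) * Complex.Gamma (1 - a) * Complex.Gamma (1 + c) *
          Complex.Gamma (1 - c) / (Complex.Gamma (1 + a - c) * Complex.Gamma (1 + c - a)) *
        (poch (-(M : ℂ)) k * poch (1 + a) k * poch b k /
          (poch 1 k * poch c k * poch (a + b - c - M) k)) *
        (poch (1 + c) M * poch (1 + c - a - b) M /
          (poch (1 + c - a) M * poch (1 + c - b) M)) := by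
  have ha : a ∈ integerComplement := by
    have := ic_add (ic_of_poch hd1) (-k - 1)
    convert this using 1; push_cast; ring
  have hc : c ∈ integerComplement := by
    have := ic_add (ic_of_poch hd2) (-M - 1)
    convert this using 1; push_cast; ring
  have hcb : 1 + c - b ∈ integerComplement := ic_of_poch hd3
  have hck : c + k ∈ integerComplement := ic_add hc k
  have hac : ∀ n : ℤ, n ≠ 0 → a - c ≠ n := by
    intro n hn h
    rcases lt_or_gt_of_ne hn with h1 | h1
    · obtain ⟨m, rfl⟩ : ∃ m : ℕ, n = -m - 1 := ⟨n.natAbs - 1, by omega⟩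
      push_cast at h
      exact hg5 m (by linear_combination h)
    · obtain ⟨m, rfl⟩ : ∃ m : ℕ, n = m + 1 := ⟨n.natAbs - 1, by omega⟩
      push_cast at h
      exact hg6 m (by linear_combination -h)
  suffices H : HasSum (fun j : ℤ => poch a j * poch (c + k) j * poch (1 + c - b + M) j /
        (poch (1 + a + k) j * poch (1 + c + M) j * poch (1 + c - b) j))
      (GG a c * (poch (-(M : ℂ)) k * poch (1 + a) k * poch b k /
          (poch 1 k * poch c k * poch (a + b - c - M) k)) *
        (poch (1 + c) M * poch (1 + c - a - b) M /
          (poch (1 + c - a) M * poch (1 + c - b) M))) from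
    ⟨H.summable.norm, H.tsum_eq⟩
  set K := poch a (k + 1) * poch (c + k) (M + 1 - k) / rf (1 + c - b) M with hK
  have hterm : ∀ j : ℤ, poch a j * poch (c + k) j * poch (1 + c - b + M) j /
        (poch (1 + a + k) j * poch (1 + c + M) j * poch (1 + c - b) j)
      = K * (rf (1 + c - b + j) M /
        (poch (a + j) (k + 1) * poch (c + k + j) (M + 1 - k))) := by
    intro j
    have e1 := poch_ratio ha j (k + 1)
    have e2 := poch_ratio hck j (M + 1 - k)
    have e3 := poch_ratio hcb j M
    push_cast at e1 e2 e3
    rw [show a + (k + 1) = 1 + a + (k : ℂ) by ring] at e1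
    rw [show c + k + (M + 1 - k) = 1 + c + (M : ℂ) by ring] at e2
    have e3' : poch (1 + c - b + M) j / poch (1 + c - b) j
        = rf (1 + c - b + j) M / rf (1 + c - b) M := by
      rw [← inv_div, e3, inv_div, poch_nat, poch_nat]
    rw [mul_div_mul_comm, mul_div_mul_comm, e1, e2, e3', hK]
    ring
  refine HasSum.congr_fun2 ?_ hterm
  rcases lt_or_ge k 0 with hk | hk
  · -- `k < 0`
    obtain ⟨n, rfl⟩ : ∃ n : ℕ, k = -((n + 1 : ℕ) : ℤ) := ⟨k.natAbs - 1, by omega⟩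
    have hz : poch 1 (-((n + 1 : ℕ) : ℤ)) = 0 := by
      rw [poch_neg, rf_succ]; simp
    rw [hz]
    have h := (hasSum_PR hck (1 + c - b) (a - n) M n).mul_left K
    simp only [mul_zero] at h
    simp only [zero_mul, div_zero, mul_zero]
    refine h.congr_fun2 fun j => ?_
    rw [show -((n + 1 : ℕ) : ℤ) + 1 = -(n : ℤ) by push_cast; ring, poch_neg,
      show (M : ℤ) + 1 - -((n + 1 : ℕ) : ℤ) = ((M + n + 2 : ℕ) : ℤ) by push_cast; ring, poch_nat,
      show a + (j : ℂ) - n = a - n + j by ring]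
    congr 1
    rw [div_mul_eq_div_div, div_inv_eq_mul]
  obtain ⟨κ, rfl⟩ : ∃ κ : ℕ, k = κ := ⟨k.natAbs, by omega⟩
  rcases lt_or_ge M κ with hM | hM
  · -- `k > M`
    obtain ⟨n, rfl⟩ : ∃ n : ℕ, κ = M + 1 + n := ⟨κ - (M + 1), by omega⟩
    have hz : poch (-(M : ℂ)) ((M + 1 + n : ℕ) : ℤ) = 0 := by
      rw [poch_nat, rf_add, rf_succ]; simp
    rw [hz]
    have h := (hasSum_PR ha (1 + c - b) (c + (M + 1)) M n).mul_left K
    simp only [mul_zero] at h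
    simp only [zero_mul, zero_div, mul_zero]
    refine h.congr_fun2 fun j => ?_
    rw [show (M : ℤ) + 1 - ((M + 1 + n : ℕ) : ℤ) = -(n : ℤ) by push_cast; ring, poch_neg,
      show ((M + 1 + n : ℕ) : ℤ) + 1 = ((M + n + 2 : ℕ) : ℤ) by push_cast; ring, poch_nat,
      show c + (((M + 1 + n : ℕ) : ℤ) : ℂ) + (j : ℂ) - n = c + (M + 1) + j by push_cast; ring]
    congr 1
    rw [mul_comm (rf _ _) (_⁻¹), div_mul_eq_div_div, div_inv_eq_mul]
  obtain ⟨L, rfl⟩ : ∃ L : ℕ, M = κ + L := ⟨M - κ, by omega⟩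
  have h := (hasSum_main b ha hc κ L hac).mul_left K
  have i1 : (κ : ℤ) + 1 = ((κ + 1 : ℕ) : ℤ) := by push_cast; ring
  have i2 : ((κ + L : ℕ) : ℤ) + 1 - κ = ((L + 1 : ℕ) : ℤ) := by push_cast; ring
  rw [i1, i2] at hK
  rw [i1, i2]
  simp only [poch_nat, Int.cast_natCast] at *
  refine h.congr_val ?_
  have ha0 := integerComplement.ne_zero ha
  have hc0 := integerComplement.ne_zero hc
  -- rewrite everything in terms of a common family of rising factorials
  have s1 : rf (-(κ : ℂ)) κ = (-1) ^ κ * rf 1 κ := by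
    rw [rf_neg]; congr 2; ring
  have s2 : rf (-((κ + L : ℕ) : ℂ)) κ = (-1) ^ κ * rf (L + 1) κ := by
    rw [rf_neg]; congr 2; push_cast; ring
  have s3 : rf (a - c - κ) κ = (-1) ^ κ * rf (1 + c - a) κ := by
    rw [rf_neg]; congr 2; ring
  have s4 : rf (a + b - c - ((κ + L : ℕ) : ℂ)) κ = (-1) ^ κ * rf (1 + c - a - b + L) κ := by
    rw [rf_neg]; congr 2; push_cast; ring
  have s5 : rf (1 + c - a - b) (κ + L)
      = rf (1 + c - a - b) L * rf (1 + c - a - b + L) κ := by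
    rw [add_comm κ L, rf_add]
  have s6 : rf (1 + c - a) (κ + L) = rf (1 + c - a) κ * rf (1 + c - a + κ) L := rf_add _ _ _
  have s7 : rf a (κ + 1) = a * rf (1 + a) κ := by rw [rf_succ', add_comm]
  have s8 : c * rf (1 + c) (κ + L) = rf c κ * rf (c + κ) (L + 1) := by
    rw [← rf_add, ← add_assoc, rf_succ', add_comm 1 c]
  have s9 : lag a b c κ L = rf b κ / rf (-(κ : ℂ)) κ *
      (rf (1 + c - a - b) L / rf (1 + c - a + κ) L) := by
    unfold lag rf
    rw [← prod_div_distrib, ← prod_div_distrib]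
    congr 1
    apply prod_congr rfl
    intro i _
    rw [← neg_div_neg_eq]
    congr 1 <;> ring
  have nn := rf_apart hac κ
  rw [s3] at nn
  have n0 : ((-1 : ℂ)) ^ κ ≠ 0 := left_ne_zero_of_mul nn
  have n1 : rf (1 + c - a) κ ≠ 0 := right_ne_zero_of_mul nn
  rw [s4] at hd5
  have n2 := right_ne_zero_of_mul hd5
  rw [s6] at hd6
  have n3 := right_ne_zero_of_mul hd6
  have n4 : rf 1 κ ≠ 0 := by
    refine prod_ne_zero_iff.mpr fun i _ => ?_
    exact_mod_cast (by omega : 1 + i ≠ 0)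
  have n5 := rf_ne_zero hc κ
  have n6 := rf_ne_zero hcb (κ + L)
  have s8' : rf (1 + c) (κ + L) = rf c κ * rf (c + κ) (L + 1) / c := by
    rw [← s8]; field_simp
  rw [hK, s9, s1, s2, s3, s4, s5, s6, s7, s8']
  have sq : ((-1 : ℂ)) ^ κ * (-1) ^ κ = 1 := by rw [← mul_pow]; simp
  generalize ((-1 : ℂ)) ^ κ = u at sq n0 ⊢
  field_simp
  linear_combination (GG a c * rf (L + 1) κ * rf (1 + a) κ * rf b κ * rf (c + κ) (L + 1) *
    rf (1 + c - a - b) L) * sq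
end
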